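/- arXiv:1503.07196 — 2 statements merged into one kernel-verified Lean document; each statement's English description precedes it below -/
import Mathlib

section
/- Let k ≥ 2 be a fixed integer. There exists a constant c_k > 0 such that for all sufficiently large Q, the number of pairs (q₁, q₂) of primes with √Q < q₁ < q₂ < 2√Q, q₁ ≡ q₂ ≡ 1 (mod k), and such that the Dirichlet character ψ_{q₁}·conj(ψ_{q₂}) modulo q₁q₂ takes the value 1 at every prime p ≤ log Q, is at least Q·exp(−c_k·log Q/log log Q). Here, for a prime q ≡ 1 (mod k), g_q denotes the least primitive root modulo q and ψ_q the unique Dirichlet character modulo q with ψ_q(g_q) = e^{2πi/k}. -/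
/-!
The theorem is a pigeonhole argument over the primes `q ≡ 1 (mod k)` in `(√Q, 2√Q)`.

Put `L = log Q`. Two primes `q₁`, `q₂` in this range give a pair to be counted as soon as
`ψ_{q₁}(p) = ψ_{q₂}(p)` for all primes `p ≤ L`: such `p` are smaller than `√Q`, so both values
are `k`-th roots of unity and `ψ_{q₁}(p) ⋅ conj(ψ_{q₂}(p)) = 1`. The vectors
`(ψ_q(p))_{p ≤ L}` take at most `k ^ π(L)` values, so if there are `S` primes `q`, the
Cauchy–Schwarz inequality gives `S² ≤ k ^ π(L) (S + 2 N)`, where `N` is the number of pairs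
(`card_sq_le_pairs`, `goodPairs_lower`). Chebyshev's bound `π(L) ≪ L / log L` makes
`k ^ π(L) ≤ exp(D L / log L)`, which is much smaller than `S` once `S ≫ √Q / log Q`, and so
`N ≫ S² / k ^ π(L) ≫ Q exp(-(D + 1) L / log L)` up to constants absorbed in the extra
factor `exp(-L / log L)`.

The substantial input is the lower bound `S ≥ c √Q / log Q` (`exists_primesAP_lower`), that is, a
Chebyshev-type lower bound for primes `≡ 1 (mod k)` in a dyadic interval. Neither the prime
number theorem for arithmetic progressions nor this weaker bound is in Mathlib, but the
analytic continuation to `Re s ≥ 1` of `∑ Λ(n) 1_{n ≡ 1 (k)} n⁻ˢ - φ(k)⁻¹ / (s - 1)` is. The bound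
follows by half of the Wiener–Ikehara argument. Take an integrable function `h = selHat` with
`∫ h = 1`, with `h ≤ 0` outside `[-1, 1]`, and with compactly supported Fourier transform. Then
`∑ aₙ n⁻¹⁻ᵋ h(4 (log n - y))` is, by Fourier inversion, a compactly supported integral of the
Dirichlet series on the line `Re s = 1 + ε` (`hasSum_selHat`). The pole contributes
`A ∫_0^∞ e^(-ε v) h(4 (v - y)) dv`, and the continuous remainder tends to `0` as `y → ∞`, after
`ε → 0`, by the Riemann–Lebesgue lemma. Since `h` is nonpositive outside `[-1, 1]`, the terms with
`|log n - y| > 1/4` can only decrease the sum, so those with `|log n - y| ≤ 1/4` already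
contribute at least a positive constant (`tauber`).
-/

open scoped Classical

/-- The least primitive root modulo `q`. -/
noncomputable def leastPrimitiveRoot (q : ℕ) : ℕ :=
  sInf {g : ℕ | orderOf ((g : ℕ) : ZMod q) = q - 1}

/-- The (unique, when `q` is a prime `≡ 1 mod k`) Dirichlet character `ψ_q` modulo `q` with
`ψ_q(g_q) = e^{2πi/k}`, where `g_q` is the least primitive root mod `q`. -/
noncomputable def psiChar (k q : ℕ) : DirichletCharacter ℂ q :=
  if h : ∃ ψ : DirichletCharacter ℂ q,
      ψ ((leastPrimitiveRoot q : ℕ) : ZMod q) =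
        Complex.exp (2 * (Real.pi : ℂ) * Complex.I / (k : ℂ))
  then h.choose else 1

/-- The complex conjugate of a Dirichlet character. -/
noncomputable def conjChar {q : ℕ} (ψ : DirichletCharacter ℂ q) : DirichletCharacter ℂ q :=
  ψ.ringHomComp (starRingEnd ℂ)

/-- `ψ̃ = ψ_{q₁} ⋅ conj(ψ_{q₂})` as a character modulo `q₁ q₂`, obtained by multiplying the
lifts of `ψ_{q₁}` and of the complex conjugate of `ψ_{q₂}` to modulus `q₁ q₂`. -/
noncomputable def tildePsi (k q₁ q₂ : ℕ) : DirichletCharacter ℂ (q₁ * q₂) :=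
  DirichletCharacter.changeLevel (dvd_mul_right q₁ q₂) (psiChar k q₁) *
    DirichletCharacter.changeLevel (dvd_mul_left q₂ q₁) (conjChar (psiChar k q₂))

section

/-! ### A band-limited minorant of the unit window -/

open Real Set Filter Topology MeasureTheory FourierTransform

/-- The function `1 - |t| + sin (2π|t|) / (2π)` on `[-1, 1]`, extended by `0`; the truncation
`min |t| 1` encodes the extension. Its Fourier transform is `selHat`. -/
noncomputable def selKer (t : ℝ) : ℝ :=
  1 - min |t| 1 + Real.sin (2 * π * min |t| 1) / (2 * π)

lemma continuous_selKer : Continuous selKer := by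
  unfold selKer; fun_prop

lemma selKer_eq_zero {t : ℝ} (ht : 1 ≤ |t|) : selKer t = 0 := by
  simp [selKer, min_eq_right ht]

lemma selKer_zero : selKer 0 = 1 := by simp [selKer]

lemma selKer_neg (t : ℝ) : selKer (-t) = selKer t := by simp [selKer]

lemma abs_selKer_le (t : ℝ) : |selKer t| ≤ 2 := by
  have h1 : 0 ≤ min |t| 1 := le_min (abs_nonneg _) zero_le_one
  have h2 : min |t| 1 ≤ 1 := min_le_right _ _
  have h3 : |Real.sin (2 * π * min |t| 1) / (2 * π)| ≤ 1 := by
    rw [abs_div, abs_of_pos (by positivity : 0 < 2 * π), div_le_one (by positivity)]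
    exact (Real.abs_sin_le_one _).trans (by linarith [pi_gt_three])
  have := abs_le.1 h3
  unfold selKer
  rw [abs_le]; constructor <;> linarith

lemma hasCompactSupport_selKer : HasCompactSupport selKer := by
  refine HasCompactSupport.intro (K := Set.Icc (-1) 1) isCompact_Icc fun t ht => ?_
  apply selKer_eq_zero
  by_contra! h
  exact ht (abs_le.1 h.le)

/-- `selKer` as a complex-valued function. -/
noncomputable def selKerC (t : ℝ) : ℂ := (selKer t : ℂ)

lemma continuous_selKerC : Continuous selKerC :=
  Complex.continuous_ofReal.comp continuous_selKer

lemma integrable_selKerC : Integrable selKerC :=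
  continuous_selKerC.integrable_of_hasCompactSupport
    (hasCompactSupport_selKer.comp_left (g := Complex.ofReal) (by simp))

/-- The Fourier transform of `selKer`, written as a real cosine integral since `selKer` is even. -/
noncomputable def selHat (u : ℝ) : ℝ :=
  2 * ∫ t in (0:ℝ)..1, selKer t * Real.cos (2 * π * u * t)

lemma fourier_selKerC (u : ℝ) : 𝓕 selKerC u = (selHat u : ℂ) := by
  rw [Real.fourier_eq']
  set F : ℝ → ℂ := fun t => Complex.exp (↑(-2 * π * inner ℝ t u) * Complex.I) • selKerC t with hF
  have hFc : Continuous F := by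
    have := continuous_selKerC
    simp only [hF]; fun_prop
  have h1 : ∫ t, F t = ∫ t in (-1:ℝ)..1, F t := by
    rw [intervalIntegral.integral_of_le (by norm_num), ← integral_Icc_eq_integral_Ioc,
      setIntegral_eq_integral_of_forall_compl_eq_zero]
    intro t ht
    have : selKer t = 0 := by
      apply selKer_eq_zero
      by_contra! h
      exact ht (abs_le.1 h.le)
    simp [hF, selKerC, this]
  rw [h1, ← intervalIntegral.integral_add_adjacent_intervals (b := 0)
    (hFc.intervalIntegrable _ _) (hFc.intervalIntegrable _ _)]
  have h2 : ∫ t in (-1:ℝ)..0, F t = ∫ t in (0:ℝ)..1, F (-t) := by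
    rw [intervalIntegral.integral_comp_neg]; simp
  have hFn : Continuous fun t => F (-t) := hFc.comp continuous_neg
  rw [h2, ← intervalIntegral.integral_add (hFn.intervalIntegrable _ _)
    (hFc.intervalIntegrable _ _), selHat]
  push_cast
  rw [← intervalIntegral.integral_ofReal, ← intervalIntegral.integral_const_mul]
  refine intervalIntegral.integral_congr fun t _ => ?_
  simp only [hF, selKerC, selKer_neg, smul_eq_mul, ← add_mul]
  push_cast
  rw [Complex.cos]
  have e1 : (inner ℝ (-t) u : ℝ) = -(t * u) := by simp [mul_comm]
  have e2 : (inner ℝ t u : ℝ) = t * u := by simp [mul_comm]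
  rw [e1, e2]
  push_cast
  rw [show (-2 * (π:ℂ) * -(↑t * ↑u) * Complex.I) = 2 * π * u * t * Complex.I by ring,
    show (-2 * (π:ℂ) * (↑t * ↑u) * Complex.I) = -(2 * π * u * t) * Complex.I by ring]
  ring

lemma selHat_abs_le (u : ℝ) : |selHat u| ≤ 4 := by
  unfold selHat
  have : ‖∫ t in (0:ℝ)..1, selKer t * Real.cos (2 * π * u * t)‖ ≤ 2 * |1 - 0| := by
    refine intervalIntegral.norm_integral_le_of_norm_le_const fun t _ => ?_
    rw [norm_mul, Real.norm_eq_abs, Real.norm_eq_abs]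
    calc _ ≤ 2 * 1 := mul_le_mul (abs_selKer_le t) (Real.abs_cos_le_one _) (abs_nonneg _) (by norm_num)
      _ = 2 := by norm_num
  rw [Real.norm_eq_abs] at this
  rw [abs_mul, abs_two]; norm_num at this; linarith

/-- The closed form `-sin² (π u) / (π² u² (u² - 1))` (with `1 - cos (2π u) = 2 sin² (π u)`), from
which both the sign outside `[-1, 1]` and the decay `O(u⁻⁴)` can be read off. -/
lemma selHat_eq {u : ℝ} (hu : 1 < |u|) :
    selHat u = -((1 - Real.cos (2 * π * u)) / (2 * π ^ 2 * (u ^ 2 * (u ^ 2 - 1)))) := by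
  have hu2 : 1 < u ^ 2 := by rw [← sq_abs]; nlinarith
  have hu0 : u ≠ 0 := by rintro rfl; simp at hu; linarith
  have hp1 : 1 + u ≠ 0 := by intro h; nlinarith [h]
  have hm1 : 1 - u ≠ 0 := by intro h; nlinarith [h]
  have hpi := pi_ne_zero
  -- An explicit primitive: integrate by parts, with `sin (2πt) cos (2πut)` linearised.
  have hF : ∀ t ∈ Set.uIcc (0:ℝ) 1, HasDerivAt (fun t : ℝ =>
      (1 - t) * (Real.sin (2 * π * u * t) / (2 * π * u)) - Real.cos (2 * π * u * t) / (2 * π * u) ^ 2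
      - (1 / (4 * π)) * (Real.cos ((2 * π * (1 + u)) * t) / (2 * π * (1 + u))
        + Real.cos ((2 * π * (1 - u)) * t) / (2 * π * (1 - u))))
      (selKer t * Real.cos (2 * π * u * t)) t := by
    intro t ht
    rw [Set.uIcc_of_le zero_le_one] at ht
    have hs : ∀ c : ℝ, HasDerivAt (fun t : ℝ => Real.sin (c * t)) (Real.cos (c * t) * c) t := by
      intro c
      have := ((hasDerivAt_id t).const_mul c).sin
      simpa using this
    have hc : ∀ c : ℝ, HasDerivAt (fun t : ℝ => Real.cos (c * t)) (-Real.sin (c * t) * c) t := by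
      intro c
      have := ((hasDerivAt_id t).const_mul c).cos
      simpa using this
    have h1 := ((hasDerivAt_id t).const_sub 1).mul ((hs (2 * π * u)).div_const (2 * π * u))
    have h2 := (hc (2 * π * u)).div_const ((2 * π * u) ^ 2)
    have h3 := (((hc (2 * π * (1 + u))).div_const (2 * π * (1 + u))).add
      ((hc (2 * π * (1 - u))).div_const (2 * π * (1 - u)))).const_mul (1 / (4 * π))
    refine ((h1.sub h2).sub h3).congr_deriv ?_
    have ek : selKer t = 1 - t + Real.sin (2 * π * t) / (2 * π) := by
      simp [selKer, abs_of_nonneg ht.1, min_eq_left ht.2]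
    have e1 : Real.sin (2 * π * (1 + u) * t) = Real.sin (2 * π * t) * Real.cos (2 * π * u * t)
        + Real.cos (2 * π * t) * Real.sin (2 * π * u * t) := by
      rw [← Real.sin_add]; ring_nf
    have e2 : Real.sin (2 * π * (1 - u) * t) = Real.sin (2 * π * t) * Real.cos (2 * π * u * t)
        - Real.cos (2 * π * t) * Real.sin (2 * π * u * t) := by
      rw [← Real.sin_sub]; ring_nf
    rw [ek, e1, e2]
    simp only [id]
    field_simp
    ring
  have hcont : Continuous fun t => selKer t * Real.cos (2 * π * u * t) := by
    have := continuous_selKer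
    fun_prop
  rw [selHat, intervalIntegral.integral_eq_sub_of_hasDerivAt hF (hcont.intervalIntegrable _ _)]
  have e1 : Real.cos (2 * π * (1 + u) * 1) = Real.cos (2 * π * u) := by
    rw [show 2 * π * (1 + u) * 1 = 2 * π * u + 2 * π by ring, Real.cos_add_two_pi]
  have e2 : Real.cos (2 * π * (1 - u) * 1) = Real.cos (2 * π * u) := by
    rw [show 2 * π * (1 - u) * 1 = 2 * π - 2 * π * u by ring, Real.cos_two_pi_sub]
  rw [e1, e2]
  simp only [mul_zero, mul_one, Real.cos_zero, Real.sin_zero]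
  have : u ^ 2 - 1 ≠ 0 := by linarith
  field_simp
  ring

lemma selHat_nonpos {u : ℝ} (hu : 1 < |u|) : selHat u ≤ 0 := by
  have hu2 : 1 < u ^ 2 := by rw [← sq_abs]; nlinarith
  rw [selHat_eq hu, neg_nonpos]
  have : 0 < u ^ 2 - 1 := by linarith
  have := Real.cos_le_one (2 * π * u)
  apply div_nonneg <;> [linarith; positivity]

lemma continuous_selHat : Continuous selHat := by
  have h : Continuous (𝓕 selKerC) := by
    exact VectorFourier.fourierIntegral_continuous Real.continuous_fourierChar
      (by exact continuous_inner) integrable_selKerC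
  have : selHat = fun u => (𝓕 selKerC u).re := by
    ext u; rw [fourier_selKerC]; simp
  rw [this]; exact Complex.continuous_re.comp h

lemma integrable_selHat : Integrable selHat := by
  refine Integrable.mono' (integrable_inv_one_add_sq.const_mul 20)
    continuous_selHat.aestronglyMeasurable (ae_of_all _ fun u => ?_)
  rw [Real.norm_eq_abs, ← div_eq_mul_inv, le_div_iff₀ (by positivity)]
  rcases le_or_gt |u| 2 with h | h
  · have : u ^ 2 ≤ 4 := by rw [← sq_abs]; nlinarith [abs_nonneg u]
    nlinarith [selHat_abs_le u, abs_nonneg (selHat u)]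
  · have hu : 4 < u ^ 2 := by rw [← sq_abs]; nlinarith
    have hd : 0 < 2 * π ^ 2 * (u ^ 2 * (u ^ 2 - 1)) := by
      have : 0 < u ^ 2 - 1 := by linarith
      positivity
    have h1 := Real.cos_le_one (2 * π * u)
    have h2 := Real.neg_one_le_cos (2 * π * u)
    rw [selHat_eq (by linarith), abs_neg, abs_div, abs_of_pos hd, abs_of_nonneg (by linarith),
      div_mul_eq_mul_div, div_le_iff₀ hd]
    have hpi : 9 < π ^ 2 := by nlinarith [pi_gt_three]
    have a1 : (1 - Real.cos (2 * π * u)) * (1 + u ^ 2) ≤ 2 * (2 * u ^ 2) := by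
      apply mul_le_mul <;> nlinarith
    have a2 : 1 ≤ u ^ 2 - 1 := by linarith
    have a3 : u ^ 2 ≤ u ^ 2 * (u ^ 2 - 1) := le_mul_of_one_le_right (sq_nonneg u) a2
    nlinarith

/-- Fourier inversion at `0`, where `selKer` equals `1`. -/
lemma integral_selHat : ∫ u, selHat u = 1 := by
  have hF : Integrable (𝓕 selKerC) := by
    have : 𝓕 selKerC = fun u => (selHat u : ℂ) := funext fourier_selKerC
    rw [this]; exact integrable_selHat.ofReal
  have h := congrFun (continuous_selKerC.fourierInv_fourier_eq integrable_selKerC hF) 0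
  rw [Real.fourierInv_eq'] at h
  simp only [inner_zero_right, mul_zero, Complex.ofReal_zero, zero_mul, Complex.exp_zero, one_smul,
    fourier_selKerC, selKerC, selKer_zero] at h
  rw [integral_complex_ofReal] at h
  exact_mod_cast h

/-! ### The lower half of the Wiener–Ikehara theorem -/

lemma norm_selKerC_mul_phase (y t : ℝ) :
    ‖selKerC t * Complex.exp (8 * π * t * y * Complex.I)‖ = |selKer t| := by
  rw [norm_mul, show (8 * (π:ℂ) * t * y * Complex.I) = ((8 * π * t * y : ℝ) : ℂ) * Complex.I by
    push_cast; ring, Complex.norm_exp_ofReal_mul_I, mul_one, selKerC, Complex.norm_real,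
    Real.norm_eq_abs]

lemma integrable_abs_selKer : Integrable fun t => |selKer t| := by
  have := integrable_selKerC.norm
  simpa [selKerC] using this

lemma continuous_selKerC_phase (y : ℝ) :
    Continuous fun t : ℝ => selKerC t * Complex.exp (8 * π * t * y * Complex.I) := by
  have := continuous_selKerC
  fun_prop

/-- The transform of `selKer` at frequency `4 (v - y)`. The factor `4` makes the sign change of
`selHat` occur at `|v - y| = 1/4`, a window short enough to fit in a dyadic interval. -/
lemma phase_integral (y v : ℝ) :
    ∫ t : ℝ, selKerC t * Complex.exp (8 * π * t * y * Complex.I) *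
      Complex.exp (-(8 * π * t * v * Complex.I)) = (selHat (4 * (v - y)) : ℂ) := by
  rw [← fourier_selKerC, Real.fourier_eq']
  congr 1; ext t
  rw [mul_assoc, ← Complex.exp_add, smul_eq_mul, mul_comm]
  congr 2
  have e2 : (inner ℝ t (4 * (v - y)) : ℝ) = t * (4 * (v - y)) := by simp [mul_comm]
  rw [e2]; push_cast; ring

lemma term_shift (a : ℕ → ℂ) (s w : ℂ) (n : ℕ) :
    LSeries.term a (s + w) n = LSeries.term a s n * Complex.exp (-(w * Real.log n)) := by
  rcases eq_or_ne n 0 with rfl | hn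
  · simp
  have hn' : (n : ℂ) ≠ 0 := by exact_mod_cast hn
  rw [LSeries.term_of_ne_zero hn, LSeries.term_of_ne_zero hn, Complex.cpow_add _ _ hn',
    Complex.cpow_def_of_ne_zero hn' w, Complex.exp_neg, Complex.ofReal_log (Nat.cast_nonneg n)]
  have := Complex.exp_ne_zero (w * Complex.log n)
  rw [Complex.ofReal_natCast, mul_comm (Complex.log n) w]
  field_simp

lemma term_integral (a : ℕ → ℂ) (s : ℂ) (y : ℝ) (n : ℕ) :
    ∫ t : ℝ, selKerC t * Complex.exp (8 * π * t * y * Complex.I) *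
      LSeries.term a (s + 8 * π * t * Complex.I) n =
      LSeries.term a s n * (selHat (4 * (Real.log n - y)) : ℂ) := by
  rw [← phase_integral, ← integral_const_mul]
  congr 1; ext t
  rw [term_shift]
  rw [show (8 * (π:ℂ) * t * Complex.I * Real.log n) = 8 * π * t * Real.log n * Complex.I by ring]
  ring

/-- The Dirichlet series smoothed by `selHat` around `log n = y` is an integral of `LSeries a`
over a bounded segment of the vertical line through `s`, by absolute convergence. -/
lemma hasSum_selHat {a : ℕ → ℂ} {s : ℂ} (hs : LSeriesSummable a s) (y : ℝ) :
    HasSum (fun n : ℕ => LSeries.term a s n * (selHat (4 * (Real.log n - y)) : ℂ))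
      (∫ t : ℝ, selKerC t * Complex.exp (8 * π * t * y * Complex.I) *
        LSeries a (s + 8 * π * t * Complex.I)) := by
  have hnorm : ∀ (n : ℕ) (t : ℝ), ‖LSeries.term a (s + 8 * π * t * Complex.I) n‖ =
      ‖LSeries.term a s n‖ := by
    intro n t
    rw [term_shift, norm_mul,
      show (-(8 * (π:ℂ) * t * Complex.I * Real.log n)) =
        ((-(8 * π * t * Real.log n) : ℝ) : ℂ) * Complex.I by push_cast; ring,
      Complex.norm_exp_ofReal_mul_I, mul_one]
  have hcont : ∀ n : ℕ, Continuous fun t : ℝ =>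
      selKerC t * Complex.exp (8 * π * t * y * Complex.I) *
        LSeries.term a (s + 8 * π * t * Complex.I) n := by
    intro n
    simp_rw [term_shift]
    have := continuous_selKerC_phase y
    fun_prop
  have hn2 : ∀ (n : ℕ) (t : ℝ), ‖selKerC t * Complex.exp (8 * π * t * y * Complex.I) *
        LSeries.term a (s + 8 * π * t * Complex.I) n‖ = |selKer t| * ‖LSeries.term a s n‖ := by
    intro n t
    rw [norm_mul, norm_selKerC_mul_phase, hnorm]
  have hinteg : ∀ n : ℕ, Integrable fun t : ℝ =>
      selKerC t * Complex.exp (8 * π * t * y * Complex.I) *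
        LSeries.term a (s + 8 * π * t * Complex.I) n := by
    intro n
    refine (integrable_abs_selKer.mul_const ‖LSeries.term a s n‖).mono'
      (hcont n).aestronglyMeasurable (ae_of_all _ fun t => (hn2 n t).le)
  have := hasSum_integral_of_summable_integral_norm hinteg (by
    simp_rw [hn2, integral_mul_const]
    exact (hs.norm).mul_left _)
  simp_rw [term_integral] at this
  have e : ∀ t : ℝ, selKerC t * Complex.exp (8 * π * t * y * Complex.I) *
        LSeries a (s + 8 * π * t * Complex.I) = ∑' n, selKerC t *
        Complex.exp (8 * π * t * y * Complex.I) * LSeries.term a (s + 8 * π * t * Complex.I) n :=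
    fun t => by rw [tsum_mul_left, LSeries]
  simp_rw [e]
  exact this

/-- The contribution of a simple pole at distance `ε`, from
`1 / (ε + iτ) = ∫_0^∞ e^(-(ε + iτ) v) dv`. -/
lemma integral_exp_selHat {ε : ℝ} (hε : 0 < ε) (y : ℝ) :
    ∫ t : ℝ, selKerC t * Complex.exp (8 * π * t * y * Complex.I) *
      (1 / (ε + 8 * π * t * Complex.I)) =
      ((∫ v in Set.Ioi (0:ℝ), Real.exp (-ε * v) * selHat (4 * (v - y)) : ℝ) : ℂ) := by
  have h1 : ∀ t : ℝ, (1 / (ε + 8 * π * t * Complex.I) : ℂ) =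
      ∫ v in Set.Ioi (0:ℝ), Complex.exp (-(ε + 8 * π * t * Complex.I) * v) := by
    intro t
    have hre : (-(ε + 8 * π * t * Complex.I) : ℂ).re < 0 := by
      simp [hε]
    rw [integral_exp_mul_complex_Ioi hre, Complex.ofReal_zero, mul_zero, Complex.exp_zero,
      neg_div_neg_eq]
  have h2 : ∀ t : ℝ, selKerC t * Complex.exp (8 * π * t * y * Complex.I) *
      (1 / (ε + 8 * π * t * Complex.I)) =
      ∫ v in Set.Ioi (0:ℝ), selKerC t * Complex.exp (8 * π * t * y * Complex.I) *
        Complex.exp (-(ε + 8 * π * t * Complex.I) * v) := by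
    intro t; rw [h1, integral_const_mul]
  simp_rw [h2]
  rw [integral_integral_swap]
  · rw [← integral_complex_ofReal]
    congr 1; ext v
    push_cast
    rw [← phase_integral, ← integral_const_mul]
    congr 1; ext t
    rw [show (-(ε + 8 * π * t * Complex.I) * v : ℂ) = -ε * v + -(8 * π * t * v * Complex.I) by ring,
      Complex.exp_add]
    ring
  · have hI : Integrable (fun v : ℝ => Real.exp (-ε * v)) (volume.restrict (Set.Ioi 0)) :=
      (integrableOn_exp_mul_Ioi (neg_neg_of_pos hε) 0)
    have := integrable_abs_selKer.mul_prod hI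
    refine this.mono' ?_ (ae_of_all _ fun p => ?_)
    · apply Continuous.aestronglyMeasurable
      have := continuous_selKerC
      unfold Function.uncurry
      fun_prop
    · simp only [Function.uncurry]
      rw [norm_mul, norm_selKerC_mul_phase, Complex.norm_exp]
      apply le_of_eq
      congr 2
      simp

/-- The smoothed sum at `1 + ε`, split according to `LSeries a = G + A / (s - 1)`; both terms on the
right have limits as `ε → 0⁺`. -/
lemma key_identity {a : ℕ → ℂ} {A : ℝ} {G : ℂ → ℂ}
    (hGc : ContinuousOn G {s | 1 ≤ s.re})
    (hs : ∀ s : ℂ, 1 < s.re → LSeriesSummable a s)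
    (hG : ∀ s : ℂ, 1 < s.re → LSeries a s = G s + A / (s - 1))
    {ε : ℝ} (hε : 0 < ε) (y : ℝ) :
    HasSum (fun n : ℕ => LSeries.term a (1 + ε) n * (selHat (4 * (Real.log n - y)) : ℂ))
      ((∫ t : ℝ, selKerC t * Complex.exp (8 * π * t * y * Complex.I) *
        G (1 + ε + 8 * π * t * Complex.I)) +
        A * ((∫ v in Set.Ioi (0:ℝ), Real.exp (-ε * v) * selHat (4 * (v - y)) : ℝ) : ℂ)) := by
  have hre : ∀ t : ℝ, (1 + ε + 8 * π * t * Complex.I : ℂ).re = 1 + ε := by intro t; simp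
  convert hasSum_selHat (hs (1 + ε) (by simp [hε])) y using 1
  rw [← integral_exp_selHat hε, ← integral_const_mul, ← integral_add]
  · congr 1; ext t
    rw [hG _ (by rw [hre]; linarith)]
    rw [show (1 + ε + 8 * π * t * Complex.I - 1 : ℂ) = ε + 8 * π * t * Complex.I by ring]
    ring
  · have hc : Continuous fun t : ℝ => selKerC t * Complex.exp (8 * π * t * y * Complex.I) *
        G (1 + ε + 8 * π * t * Complex.I) := by
      refine (continuous_selKerC_phase y).mul ?_
      refine hGc.comp_continuous (by fun_prop) fun t => ?_
      rw [Set.mem_ofPred_eq, hre]; linarith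
    refine hc.integrable_of_hasCompactSupport ?_
    have : HasCompactSupport selKerC := hasCompactSupport_selKer.comp_left (g := Complex.ofReal) (by simp)
    exact (this.mul_right).mul_right
  · have hne : ∀ t : ℝ, (ε + 8 * π * t * Complex.I : ℂ) ≠ 0 := by
      intro t h
      have := congrArg Complex.re h
      simp at this
      linarith
    have hc : Continuous fun t : ℝ => selKerC t * Complex.exp (8 * π * t * y * Complex.I) *
        (1 / (ε + 8 * π * t * Complex.I)) := by
      refine (continuous_selKerC_phase y).mul ?_
      exact continuous_const.div (by fun_prop) hne
    refine (hc.integrable_of_hasCompactSupport ?_).const_mul _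
    have : HasCompactSupport selKerC := hasCompactSupport_selKer.comp_left (g := Complex.ofReal) (by simp)
    exact (this.mul_right).mul_right

lemma tendsto_G_integral {G : ℂ → ℂ} (hGc : ContinuousOn G {s | 1 ≤ s.re}) (y : ℝ) :
    Tendsto (fun ε : ℝ => ∫ t : ℝ, selKerC t * Complex.exp (8 * π * t * y * Complex.I) *
        G (1 + ε + 8 * π * t * Complex.I)) (𝓝[>] 0)
      (𝓝 (∫ t : ℝ, selKerC t * Complex.exp (8 * π * t * y * Complex.I) *
        G (1 + 8 * π * t * Complex.I))) := by
  have hre : ∀ ε t : ℝ, (1 + ε + 8 * π * t * Complex.I : ℂ).re = 1 + ε := by intro ε t; simp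
  have him : ∀ ε t : ℝ, (1 + ε + 8 * π * t * Complex.I : ℂ).im = 8 * π * t := by intro ε t; simp
  have hcomp : IsCompact (Set.Icc (1:ℝ) 2 ×ℂ Set.Icc (-(8 * π)) (8 * π)) :=
    isCompact_Icc.reProdIm isCompact_Icc
  obtain ⟨M, hM⟩ := hcomp.exists_bound_of_continuousOn (f := G)
    (hGc.mono fun s hs => (Complex.mem_reProdIm.1 hs).1.1)
  refine tendsto_integral_filter_of_dominated_convergence (fun t => |selKer t| * M) ?_ ?_
    (integrable_abs_selKer.mul_const M) ?_
  · filter_upwards [self_mem_nhdsWithin] with ε hε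
    refine Continuous.aestronglyMeasurable ?_
    refine (continuous_selKerC_phase y).mul ?_
    refine hGc.comp_continuous (by fun_prop) fun t => ?_
    rw [Set.mem_ofPred_eq, hre]; linarith [Set.mem_Ioi.1 hε]
  · filter_upwards [Ioo_mem_nhdsGT (zero_lt_one' ℝ)] with ε hε
    refine ae_of_all _ fun t => ?_
    rw [norm_mul, norm_selKerC_mul_phase]
    rcases le_or_gt 1 |t| with h | h
    · simp [selKer_eq_zero h]
    · refine mul_le_mul_of_nonneg_left (hM _ ?_) (abs_nonneg _)
      rw [Complex.mem_reProdIm, hre, him]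
      have := abs_lt.1 h
      refine ⟨⟨by linarith [hε.1], by linarith [hε.2]⟩, ?_, ?_⟩ <;> nlinarith [pi_pos]
  · refine ae_of_all _ fun t => Tendsto.mul tendsto_const_nhds ?_
    have h1 : ContinuousWithinAt G {s | 1 ≤ s.re} (1 + 8 * π * t * Complex.I) :=
      hGc _ (by simp)
    refine h1.tendsto.comp (tendsto_nhdsWithin_iff.2 ⟨?_, ?_⟩)
    · have : Continuous fun ε : ℝ => (1 + ε + 8 * π * t * Complex.I : ℂ) := by fun_prop
      have := this.tendsto 0
      simp only [Complex.ofReal_zero, add_zero] at this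
      exact this.mono_left nhdsWithin_le_nhds
    · filter_upwards [self_mem_nhdsWithin] with ε hε
      rw [hre]; linarith [Set.mem_Ioi.1 hε]

lemma integrable_selHat_shift (y : ℝ) : Integrable fun v => selHat (4 * (v - y)) := by
  have h : Integrable fun v => selHat (4 * v) :=
    integrable_selHat.comp_mul_left' (by norm_num : (4:ℝ) ≠ 0)
  exact h.comp_sub_right y

lemma tendsto_J (y : ℝ) :
    Tendsto (fun ε : ℝ => ∫ v in Set.Ioi (0:ℝ), Real.exp (-ε * v) * selHat (4 * (v - y))) (𝓝[>] 0)
      (𝓝 (∫ v in Set.Ioi (0:ℝ), selHat (4 * (v - y)))) := by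
  have hI := (integrable_selHat_shift y).integrableOn (s := Set.Ioi 0)
  have hc := continuous_selHat
  refine tendsto_integral_filter_of_dominated_convergence _ ?_ ?_ hI.norm ?_
  · refine Eventually.of_forall fun ε => Continuous.aestronglyMeasurable ?_
    fun_prop
  · filter_upwards [self_mem_nhdsWithin] with ε hε
    filter_upwards [ae_restrict_mem measurableSet_Ioi] with v hv
    rw [norm_mul, Real.norm_eq_abs, Real.abs_exp]
    refine mul_le_of_le_one_left (norm_nonneg _) (Real.exp_le_one_iff.2 ?_)
    have := mul_pos (Set.mem_Ioi.1 hε) (Set.mem_Ioi.1 hv)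
    linarith
  · refine ae_of_all _ fun v => ?_
    have : Continuous fun ε : ℝ => Real.exp (-ε * v) * selHat (4 * (v - y)) := by fun_prop
    have := this.tendsto 0
    simp only [neg_zero, zero_mul, Real.exp_zero, one_mul] at this
    exact this.mono_left nhdsWithin_le_nhds

/-- The pole term converges to `∫ selHat (4 v) dv = 1/4`. -/
lemma tendsto_J_atTop :
    Tendsto (fun y : ℝ => ∫ v in Set.Ioi (0:ℝ), selHat (4 * (v - y))) atTop (𝓝 (1 / 4)) := by
  have h : Integrable fun v => selHat (4 * v) :=
    integrable_selHat.comp_mul_left' (by norm_num : (4:ℝ) ≠ 0)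
  have h1 : ∫ v, selHat (4 * v) = 1 / 4 := by
    rw [Measure.integral_comp_mul_left, integral_selHat]; norm_num [abs_of_pos]
  have h2 := (aecover_Ioi (μ := volume) (tendsto_neg_atTop_atBot (G := ℝ))).integral_tendsto_of_countably_generated h
  rw [h1] at h2
  refine h2.congr fun y => ?_
  have := (measurePreserving_sub_right volume y).setIntegral_preimage_emb
    (measurableEmbedding_subRight y) (fun v => selHat (4 * v)) (Set.Ioi (-y))
  rw [← this]
  congr 2
  ext v; simp

/-- The Riemann–Lebesgue lemma on the line `Re s = 1`. -/
lemma tendsto_G_atTop {G : ℂ → ℂ} :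
    Tendsto (fun y : ℝ => ∫ t : ℝ, selKerC t * Complex.exp (8 * π * t * y * Complex.I) *
        G (1 + 8 * π * t * Complex.I)) atTop (𝓝 0) := by
  have h := Real.zero_at_infty_fourier (fun t : ℝ => selKerC t * G (1 + 8 * π * t * Complex.I))
  have h2 : Tendsto (fun y : ℝ => -4 * y) atTop (cocompact ℝ) :=
    (tendsto_id.const_mul_atTop_of_neg (by norm_num : (-4:ℝ) < 0)).mono_right atBot_le_cocompact
  refine (h.comp h2).congr fun y => ?_
  simp only [Function.comp]
  rw [Real.fourier_eq']
  congr 1; ext t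
  have e2 : (inner ℝ t (-4 * y) : ℝ) = t * (-4 * y) := by simp [mul_comm]
  rw [e2, smul_eq_mul]
  push_cast
  rw [show (-2 * (π:ℂ) * (t * (-4 * y)) * Complex.I) = 8 * π * t * y * Complex.I by ring]
  ring

/-- If `a ≥ 0` and `∑ aₙ n⁻ˢ - A / (s - 1)` extends continuously to `Re s ≥ 1` with `A > 0`, then
`∑ aₙ ≫ eʸ` over `e^(y - 1/4) ≤ n ≤ e^(y + 1/4)`. -/
lemma tauber {a : ℕ → ℝ} (ha : ∀ n, 0 ≤ a n) {A : ℝ} (hA : 0 < A) {G : ℂ → ℂ}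
    (hGc : ContinuousOn G {s | 1 ≤ s.re})
    (hs : ∀ s : ℂ, 1 < s.re → LSeriesSummable (fun n => (a n : ℂ)) s)
    (hG : ∀ s : ℂ, 1 < s.re → LSeries (fun n => (a n : ℂ)) s = G s + A / (s - 1)) :
    ∃ c > 0, ∀ᶠ y in atTop, c * Real.exp y ≤
      ∑ n ∈ Finset.Icc ⌈Real.exp (y - 1 / 4)⌉₊ ⌊Real.exp (y + 1 / 4)⌋₊, a n := by
  refine ⟨A / (32 * Real.exp (1 / 4)), by positivity, ?_⟩
  have h0 := ((Complex.continuous_re.tendsto _).comp (tendsto_G_atTop (G := G))).add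
    (tendsto_J_atTop.const_mul A)
  simp only [Complex.zero_re, zero_add] at h0
  -- The limit of the smoothed sums is `A / 4`; half of it is kept.
  filter_upwards [h0.eventually_const_lt (show A / 8 < A * (1 / 4) by linarith)] with y hy
  simp only [Function.comp] at hy
  have h1 := ((Complex.continuous_re.tendsto _).comp (tendsto_G_integral hGc y)).add
    ((tendsto_J y).const_mul A)
  obtain ⟨ε, hε, hlt⟩ := ((h1.eventually_const_lt hy).and self_mem_nhdsWithin).exists.imp
    fun _ h => And.symm h
  replace hε : 0 < ε := hε
  simp only [Function.comp] at hlt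
  have hsum := Complex.hasSum_re (key_identity hGc hs hG hε y)
  rw [Complex.add_re, Complex.re_ofReal_mul, Complex.ofReal_re] at hsum
  have hb : HasSum (fun n : ℕ => if n ∈ Finset.Icc ⌈Real.exp (y - 1 / 4)⌉₊ ⌊Real.exp (y + 1 / 4)⌋₊
      then 4 * Real.exp (-(y - 1 / 4)) * a n else 0)
      (∑ n ∈ Finset.Icc ⌈Real.exp (y - 1 / 4)⌉₊ ⌊Real.exp (y + 1 / 4)⌋₊,
        4 * Real.exp (-(y - 1 / 4)) * a n) := by
    rw [← Finset.sum_congr rfl (fun n hn => if_pos hn)]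
    exact hasSum_sum_of_ne_finset_zero fun n hn => if_neg hn
  -- Inside the window `selHat ≤ 4` and `n ^ (1 + ε) ≥ n ≥ e ^ (y - 1/4)`; outside, `selHat ≤ 0`.
  have hle := hasSum_le (fun n => ?_) hsum hb
  · rw [← Finset.mul_sum] at hle
    have h3 := (hlt.le.trans hle)
    set S := ∑ n ∈ Finset.Icc ⌈Real.exp (y - 1 / 4)⌉₊ ⌊Real.exp (y + 1 / 4)⌋₊, a n
    have e1 : Real.exp (-(y - 1 / 4)) = Real.exp (1 / 4) / Real.exp y := by
      rw [← Real.exp_sub]; ring_nf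
    rw [e1] at h3
    have p1 := Real.exp_pos (1 / 4)
    have p2 := Real.exp_pos y
    rw [div_mul_eq_mul_div, div_le_iff₀ (by positivity)]
    have : A / 8 * Real.exp y ≤ 4 * Real.exp (1 / 4) * S := by
      calc A / 8 * Real.exp y ≤ (4 * (Real.exp (1 / 4) / Real.exp y) * S) * Real.exp y := by gcongr
        _ = 4 * Real.exp (1 / 4) * S := by field_simp
    linarith
  · rcases eq_or_ne n 0 with rfl | hn
    · simp only [LSeries.term_zero, zero_mul, Complex.zero_re]
      split_ifs
      · have := ha 0
        positivity
      · exact le_rfl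
    have hnpos : (0:ℝ) < n := by exact_mod_cast Nat.pos_of_ne_zero hn
    have hterm : LSeries.term (fun n => (a n : ℂ)) (1 + ε) n =
        ((a n / (n:ℝ) ^ (1 + ε) : ℝ) : ℂ) := by
      rw [LSeries.term_of_ne_zero hn]
      push_cast
      rw [Complex.ofReal_cpow hnpos.le]
      push_cast; rfl
    rw [hterm, ← Complex.ofReal_mul, Complex.ofReal_re]
    have hpow : 0 < (n:ℝ) ^ (1 + ε) := Real.rpow_pos_of_pos hnpos _
    have hq : 0 ≤ a n / (n:ℝ) ^ (1 + ε) := div_nonneg (ha n) hpow.le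
    split_ifs with hmem
    · rw [Finset.mem_Icc, Nat.ceil_le] at hmem
      have hn1 : (n:ℝ) ≤ (n:ℝ) ^ (1 + ε) := by
        have : (1:ℝ) ≤ n := by exact_mod_cast Nat.one_le_iff_ne_zero.2 hn
        calc (n:ℝ) = (n:ℝ) ^ (1:ℝ) := (Real.rpow_one _).symm
          _ ≤ _ := Real.rpow_le_rpow_of_exponent_le this (by linarith)
      have h4 : selHat (4 * (Real.log n - y)) ≤ 4 := (le_abs_self _).trans (selHat_abs_le _)
      calc a n / (n:ℝ) ^ (1 + ε) * selHat (4 * (Real.log n - y))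
          ≤ a n / (n:ℝ) ^ (1 + ε) * 4 := mul_le_mul_of_nonneg_left h4 hq
        _ ≤ a n / Real.exp (y - 1 / 4) * 4 := by
            have := ha n
            have := hmem.1.trans hn1
            gcongr
        _ = _ := by rw [Real.exp_neg]; ring
    · refine mul_nonpos_of_nonneg_of_nonpos hq (selHat_nonpos ?_)
      by_contra! h
      apply hmem
      rw [abs_le] at h
      rw [Finset.mem_Icc, Nat.ceil_le, Nat.le_floor_iff (Real.exp_pos _).le,
        ← Real.le_log_iff_exp_le hnpos, ← Real.log_le_iff_le_exp hnpos]
      constructor <;> linarith [h.1, h.2]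

/-! ### Primes congruent to `1` modulo `k` in a dyadic interval -/

/-- The primes `q ≡ 1 (mod k)` with `X < q < 2 X` (see `mem_primesAP`). The congruence is written
`q % k = 1`, which is faithful for `k ≥ 2`. -/
noncomputable def primesAP (k : ℕ) (X : ℝ) : Finset ℕ :=
  (Finset.range ⌈2 * X⌉₊).filter fun q => q.Prime ∧ X < q ∧ q % k = 1

lemma mem_primesAP {k : ℕ} {X : ℝ} {q : ℕ} :
    q ∈ primesAP k X ↔ q.Prime ∧ X < q ∧ (q : ℝ) < 2 * X ∧ q % k = 1 := by
  rw [primesAP, Finset.mem_filter, Finset.mem_range, Nat.lt_ceil]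
  tauto

/-- `tauber` applied to the von Mangoldt function on the class `1 (mod k)`, where `A = φ(k)⁻¹`. -/
lemma residueClass_window {k : ℕ} (hk : 2 ≤ k) :
    ∃ c > 0, ∀ᶠ y in atTop, c * Real.exp y ≤
      ∑ n ∈ Finset.Icc ⌈Real.exp (y - 1 / 4)⌉₊ ⌊Real.exp (y + 1 / 4)⌋₊,
        ArithmeticFunction.vonMangoldt.residueClass (1 : ZMod k) n := by
  have : NeZero k := ⟨by omega⟩
  have hA : 0 < ((k.totient : ℝ))⁻¹ := by
    have := Nat.totient_pos.2 (by omega : 0 < k)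
    positivity
  refine tauber (ArithmeticFunction.vonMangoldt.residueClass_nonneg _) hA
    (ArithmeticFunction.vonMangoldt.continuousOn_LFunctionResidueClassAux (1 : ZMod k)) ?_ ?_
  · intro s hs
    apply LSeriesSummable_of_abscissaOfAbsConv_lt_re
    exact (ArithmeticFunction.vonMangoldt.abscissaOfAbsConv_residueClass_le_one _).trans_lt
      (by exact_mod_cast hs)
  · intro s hs
    rw [ArithmeticFunction.vonMangoldt.eqOn_LFunctionResidueClassAux isUnit_one hs]
    push_cast
    ring

/-- A Chebyshev-type lower bound: there are `≫ X / log X` primes `q ≡ 1 (mod k)` in `(X, 2 X)`. The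
prime powers in the window contribute only `O(√X)`. -/
lemma exists_primesAP_lower {k : ℕ} (hk : 2 ≤ k) :
    ∃ c > 0, ∀ᶠ X : ℝ in atTop, c * X / Real.log X ≤ (primesAP k X).card := by
  obtain ⟨c, hc, hev⟩ := residueClass_window hk
  obtain ⟨C, hC⟩ := Chebyshev.psi_sub_theta_le_mul_sqrt
  refine ⟨c / 4, by positivity, ?_⟩
  -- The window centred at `log X + 3/10` is `[log X + 1/20, log X + 11/20]`, and `11/20 < log 2`.
  have hy : Tendsto (fun X : ℝ => Real.log X + 3 / 10) atTop atTop :=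
    tendsto_atTop_add_const_right _ _ Real.tendsto_log_atTop
  have hsq : ∀ᶠ X : ℝ in atTop, C * √(2 * X) ≤ c / 2 * X := by
    have h1 : Tendsto (fun X : ℝ => √X) atTop atTop := Real.tendsto_sqrt_atTop
    filter_upwards [h1.eventually_ge_atTop (C * √2 / (c / 2)), eventually_gt_atTop 0] with X hX h0
    rw [div_le_iff₀ (by positivity)] at hX
    rw [Real.sqrt_mul (by norm_num)]
    nth_rewrite 2 [← Real.mul_self_sqrt h0.le]
    nlinarith [Real.sqrt_nonneg X]
  filter_upwards [hy.eventually hev, hsq, eventually_ge_atTop 2] with X hX hs hX2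
  have hX0 : 0 < X := by linarith
  have hlog : 0 < Real.log X := Real.log_pos (by linarith)
  have hlog2 : Real.log (2 * X) ≤ 2 * Real.log X := by
    rw [Real.log_mul (by norm_num) hX0.ne']
    linarith [Real.log_le_log (by norm_num) hX2]
  have hlo : X < Real.exp (Real.log X + 3 / 10 - 1 / 4) := by
    nth_rewrite 1 [← Real.exp_log hX0]
    exact Real.exp_lt_exp.2 (by linarith)
  have hhi : Real.exp (Real.log X + 3 / 10 + 1 / 4) < 2 * X := by
    have : 2 * X = Real.exp (Real.log X + Real.log 2) := by
      rw [Real.exp_add, Real.exp_log hX0, Real.exp_log (by norm_num)]; ring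
    rw [this]
    exact Real.exp_lt_exp.2 (by linarith [Real.log_two_gt_d9])
  have hexp : X ≤ Real.exp (Real.log X + 3 / 10) := by
    nth_rewrite 1 [← Real.exp_log hX0]
    exact Real.exp_le_exp.2 (by linarith)
  set W := Finset.Icc ⌈Real.exp (Real.log X + 3 / 10 - 1 / 4)⌉₊
    ⌊Real.exp (Real.log X + 3 / 10 + 1 / 4)⌋₊ with hW
  have hWmem : ∀ n ∈ W, X < n ∧ (n : ℝ) < 2 * X := by
    intro n hn
    rw [hW, Finset.mem_Icc, Nat.ceil_le, Nat.le_floor_iff (Real.exp_pos _).le] at hn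
    exact ⟨hlo.trans_le hn.1, hn.2.trans_lt hhi⟩
  have hprime : ∑ n ∈ W with n.Prime, ArithmeticFunction.vonMangoldt.residueClass (1 : ZMod k) n
      ≤ (primesAP k X).card * Real.log (2 * X) := by
    calc _ ≤ ∑ n ∈ W with n.Prime, if n ∈ primesAP k X then Real.log (2 * X) else 0 := by
          refine Finset.sum_le_sum fun n hn => ?_
          rw [Finset.mem_filter] at hn
          obtain ⟨h1, h2⟩ := hWmem n hn.1
          by_cases hmod : (n : ZMod k) = 1
          · have hm : n ∈ primesAP k X := by
              refine mem_primesAP.2 ⟨hn.2, h1, h2, ?_⟩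
              have : n ≡ 1 [MOD k] := (ZMod.natCast_eq_natCast_iff n 1 k).1 (by simpa using hmod)
              rw [Nat.ModEq, Nat.mod_eq_of_lt (by omega : 1 < k)] at this
              exact this
            rw [if_pos hm]
            refine (ArithmeticFunction.vonMangoldt.residueClass_le _ n).trans ?_
            refine ArithmeticFunction.vonMangoldt_le_log.trans ?_
            exact Real.log_le_log (by linarith) h2.le
          · have : ArithmeticFunction.vonMangoldt.residueClass (1 : ZMod k) n = 0 :=
              Set.indicator_of_notMem (by simpa using hmod) _
            rw [this]
            split_ifs
            · exact Real.log_nonneg (by linarith)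
            · exact le_rfl
      _ ≤ ∑ n ∈ primesAP k X, Real.log (2 * X) := by
          rw [← Finset.sum_filter]
          refine Finset.sum_le_sum_of_subset_of_nonneg (fun n hn => (Finset.mem_filter.1 hn).2)
            fun _ _ _ => Real.log_nonneg (by linarith)
      _ = _ := by rw [Finset.sum_const, nsmul_eq_mul]
  have hnonprime : ∑ n ∈ W with ¬ n.Prime,
      ArithmeticFunction.vonMangoldt.residueClass (1 : ZMod k) n ≤ C * √(2 * X) := by
    refine le_trans ?_ (hC (2 * X))
    rw [Chebyshev.psi_sub_theta_eq_sum_not_prime]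
    calc _ ≤ ∑ n ∈ W with ¬ n.Prime, ArithmeticFunction.vonMangoldt n :=
          Finset.sum_le_sum fun n _ => ArithmeticFunction.vonMangoldt.residueClass_le _ n
      _ ≤ _ := by
          refine Finset.sum_le_sum_of_subset_of_nonneg (fun n hn => ?_)
            fun _ _ _ => ArithmeticFunction.vonMangoldt_nonneg
          rw [Finset.mem_filter] at hn ⊢
          obtain ⟨h1, h2⟩ := hWmem n hn.1
          refine ⟨Finset.mem_Ioc.2 ⟨?_, Nat.le_floor h2.le⟩, hn.2⟩
          have : (0:ℝ) < n := hX0.trans h1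
          exact_mod_cast this
  have htot := Finset.sum_filter_add_sum_filter_not W (fun n => n.Prime)
    (fun n => ArithmeticFunction.vonMangoldt.residueClass (1 : ZMod k) n)
  have h5 : c * X ≤ c * Real.exp (Real.log X + 3 / 10) := by gcongr
  have h6 : ((primesAP k X).card : ℝ) * Real.log (2 * X) ≤ (primesAP k X).card * (2 * Real.log X) := by
    gcongr
  rw [div_le_iff₀ hlog]
  linarith

/-! ### Values of the characters -/

lemma orderOf_leastPrimitiveRoot {q : ℕ} (hq : q.Prime) :
    orderOf ((leastPrimitiveRoot q : ℕ) : ZMod q) = q - 1 := by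
  have : Fact q.Prime := ⟨hq⟩
  have hne : {g : ℕ | orderOf ((g : ℕ) : ZMod q) = q - 1}.Nonempty := by
    obtain ⟨u, hu⟩ := IsCyclic.exists_generator (α := (ZMod q)ˣ)
    refine ⟨(u : ZMod q).val, ?_⟩
    rw [Set.mem_ofPred_eq, ZMod.natCast_val, ZMod.cast_id', id, orderOf_units,
      orderOf_eq_card_of_forall_mem_zpowers hu, Nat.card_eq_fintype_card, ZMod.card_units]
  exact Nat.sInf_mem hne

/-- `ψ_q` takes `k`-th roots of unity as values on units. The congruence `q ≡ 1 (mod k)` is not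
needed: if no character has the prescribed value, `psiChar k q` is trivial. -/
lemma psiChar_pow {k q : ℕ} (hk : 2 ≤ k) (hq : q.Prime) {x : ZMod q} (hx : IsUnit x) :
    psiChar k q x ^ k = 1 := by
  have : Fact q.Prime := ⟨hq⟩
  unfold psiChar
  split_ifs with h
  · have hψ := h.choose_spec
    set ψ := h.choose
    have hord := orderOf_leastPrimitiveRoot hq
    set g := leastPrimitiveRoot q
    have hq2 := hq.two_le
    have hg : IsUnit ((g : ℕ) : ZMod q) := by
      refine IsUnit.of_pow_eq_one (n := q - 1) ?_ (by omega)
      rw [← hord]; exact pow_orderOf_eq_one _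
    obtain ⟨u, hu⟩ := hg
    obtain ⟨v, rfl⟩ := hx
    have htop : Subgroup.zpowers u = ⊤ := by
      apply Subgroup.eq_top_of_card_eq
      rw [Nat.card_zpowers, ← orderOf_units, hu, hord, Nat.card_eq_fintype_card, ZMod.card_units]
    have hv : v ∈ Submonoid.powers u := by
      rw [mem_powers_iff_mem_zpowers, htop]; trivial
    obtain ⟨j, hj⟩ := hv
    have hk0 : (k : ℂ) ≠ 0 := by exact_mod_cast (by omega : k ≠ 0)
    rw [← hj]
    simp only [Units.val_pow_eq_pow_val, map_pow]
    rw [hu, hψ, ← pow_mul, mul_comm j k, pow_mul, ← Complex.exp_nat_mul,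
      mul_div_cancel₀ _ hk0, Complex.exp_two_pi_mul_I, one_pow]
  · rw [MulChar.one_apply hx, one_pow]

lemma tildePsi_eq_one {k q₁ q₂ p : ℕ} (hk : 2 ≤ k) (h₁ : q₁.Prime) (h₂ : q₂.Prime)
    (hp : p.Prime) (hp₁ : p < q₁) (hp₂ : p < q₂)
    (h : psiChar k q₁ (p : ZMod q₁) = psiChar k q₂ (p : ZMod q₂)) :
    tildePsi k q₁ q₂ ((p : ℕ) : ZMod (q₁ * q₂)) = 1 := by
  have c₁ : p.Coprime q₁ := (Nat.coprime_primes hp h₁).2 hp₁.ne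
  have c₂ : p.Coprime q₂ := (Nat.coprime_primes hp h₂).2 hp₂.ne
  have hu : IsUnit ((p : ℕ) : ZMod (q₁ * q₂)) :=
    (ZMod.isUnit_iff_coprime _ _).2 (Nat.Coprime.mul_right c₁ c₂)
  have hu₂ : IsUnit ((p : ℕ) : ZMod q₂) := (ZMod.isUnit_iff_coprime _ _).2 c₂
  obtain ⟨u, hu⟩ := hu
  rw [tildePsi, MulChar.mul_apply, ← hu, DirichletCharacter.changeLevel_eq_cast_of_dvd,
    DirichletCharacter.changeLevel_eq_cast_of_dvd, hu,
    ZMod.cast_natCast (dvd_mul_right q₁ q₂), ZMod.cast_natCast (dvd_mul_left q₂ q₁),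
    conjChar, MulChar.ringHomComp_apply, h, Complex.mul_conj, Complex.normSq_eq_norm_sq,
    Complex.norm_eq_one_of_pow_eq_one (psiChar_pow hk h₂ hu₂) (by omega)]
  simp

/-! ### Counting coincidences -/

/-- Pigeonhole by Cauchy–Schwarz: a map from `S` to `T` has at least about `|S|² / |T|` coincidences,
of which at most `|S|` are diagonal and the rest are counted twice by the pairs `a < b`. -/
lemma card_sq_le_pairs {β : Type*} (S : Finset ℕ) (T : Finset β) (f : ℕ → β)
    (hf : ∀ a ∈ S, f a ∈ T) :
    S.card ^ 2 ≤ T.card * (S.card + 2 *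
      ((S ×ˢ S).filter fun x : ℕ × ℕ => x.1 < x.2 ∧ f x.1 = f x.2).card) := by
  set P := (S ×ˢ S).filter fun x : ℕ × ℕ => f x.1 = f x.2 with hP
  set N := (S ×ˢ S).filter fun x : ℕ × ℕ => x.1 < x.2 ∧ f x.1 = f x.2 with hN
  have h1 : S.card = ∑ t ∈ T, (S.filter fun a => f a = t).card :=
    Finset.card_eq_sum_card_fiberwise hf
  have h2 : P.card = ∑ t ∈ T, (S.filter fun a => f a = t).card ^ 2 := by
    rw [Finset.card_eq_sum_card_fiberwise (f := fun x : ℕ × ℕ => f x.1) (t := T)]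
    · refine Finset.sum_congr rfl fun t _ => ?_
      rw [sq, ← Finset.card_product]
      congr 1
      ext ⟨a, b⟩
      simp only [hP, Finset.mem_filter, Finset.mem_product]
      constructor
      · rintro ⟨⟨⟨ha, hb⟩, hab⟩, rfl⟩; exact ⟨⟨ha, rfl⟩, hb, hab.symm⟩
      · rintro ⟨⟨ha, rfl⟩, hb, hab⟩; exact ⟨⟨⟨ha, hb⟩, hab.symm⟩, rfl⟩
    · intro x hx
      exact hf _ (Finset.mem_product.1 (Finset.mem_filter.1 hx).1).1
  have h3 : S.card ^ 2 ≤ T.card * P.card := by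
    rw [h2]; nth_rewrite 1 [h1]
    exact sq_sum_le_card_mul_sum_sq
  have h4 : P ⊆ S.image (fun a => (a, a)) ∪ (N ∪ N.image Prod.swap) := by
    rintro ⟨a, b⟩ hx
    simp only [hP, Finset.mem_filter, Finset.mem_product] at hx
    simp only [hN, Finset.mem_union, Finset.mem_image, Finset.mem_filter, Finset.mem_product,
      Prod.exists, Prod.swap_prod_mk, Prod.mk.injEq]
    rcases lt_trichotomy a b with h | h | h
    · exact Or.inr (Or.inl ⟨hx.1, h, hx.2⟩)
    · exact Or.inl ⟨a, hx.1.1, rfl, h⟩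
    · exact Or.inr (Or.inr ⟨b, a, ⟨⟨hx.1.2, hx.1.1⟩, h, hx.2.symm⟩, rfl, rfl⟩)
  have h5 : P.card ≤ S.card + 2 * N.card := by
    refine (Finset.card_le_card h4).trans ((Finset.card_union_le _ _).trans ?_)
    have := Finset.card_union_le N (N.image Prod.swap)
    have := Finset.card_image_le (s := N) (f := Prod.swap)
    have := Finset.card_image_le (s := S) (f := fun a => (a, a))
    omega
  exact h3.trans (Nat.mul_le_mul_left _ h5)

/-- The set of pairs `(q₁, q₂)` of primes whose size is bounded below in the theorem. -/
def goodPairs (k : ℕ) (Q : ℝ) : Set (ℕ × ℕ) :=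
  {qq | qq.1.Prime ∧ qq.2.Prime ∧
          Real.sqrt Q < (qq.1 : ℝ) ∧ qq.1 < qq.2 ∧ (qq.2 : ℝ) < 2 * Real.sqrt Q ∧
          qq.1 % k = 1 ∧ qq.2 % k = 1 ∧
          ∀ p : ℕ, p.Prime → (p : ℝ) ≤ Real.log Q →
            tildePsi k qq.1 qq.2 ((p : ℕ) : ZMod (qq.1 * qq.2)) = 1}

/-- `card_sq_le_pairs` for the map `q ↦ (ψ_q(p))_{p ≤ log Q}`, which takes at most `k ^ π(log Q)`
values. The hypothesis `log Q ≤ √Q` ensures `p < q`, so that `p` is a unit modulo `q`. -/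
lemma goodPairs_lower {k : ℕ} (hk : 2 ≤ k) {Q : ℝ} (hQ : Real.log Q ≤ √Q) (hQ0 : 0 ≤ Real.log Q) :
    (primesAP k √Q).card ^ 2 ≤ k ^ (Nat.primeCounting ⌊Real.log Q⌋₊) *
      ((primesAP k √Q).card + 2 * (goodPairs k Q).ncard) := by
  set S := primesAP k √Q
  set P := Nat.primesLE ⌊Real.log Q⌋₊ with hP
  set T : Finset (P → ℂ) := Fintype.piFinset fun _ => Polynomial.nthRootsFinset k (1 : ℂ)
  set f : ℕ → P → ℂ := fun q p => psiChar k q ((p : ℕ) : ZMod q)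
  have hlt : ∀ q ∈ S, ∀ p : ℕ, (p : ℝ) ≤ Real.log Q → p < q := by
    intro q hq p hp
    have := (mem_primesAP.1 hq).2.1
    exact_mod_cast (hp.trans hQ).trans_lt this
  have hPle : ∀ p ∈ P, (p : ℝ) ≤ Real.log Q := fun p hp =>
    (Nat.le_floor_iff hQ0).1 (Nat.le_of_mem_primesLE hp)
  have hf : ∀ q ∈ S, f q ∈ T := by
    intro q hq
    refine Fintype.mem_piFinset.2 fun p => ?_
    rw [Polynomial.mem_nthRootsFinset (by omega)]
    have hq' := (mem_primesAP.1 hq).1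
    refine psiChar_pow hk hq' ((ZMod.isUnit_iff_coprime _ _).2 ?_)
    exact (Nat.coprime_primes (Nat.prime_of_mem_primesLE p.2) hq').2
      (hlt q hq p (hPle p p.2)).ne
  have hT : T.card ≤ k ^ (Nat.primeCounting ⌊Real.log Q⌋₊) := by
    rw [Fintype.card_piFinset, Finset.prod_const, Finset.card_univ, Fintype.card_coe, hP,
      Nat.primesLE_card_eq_primeCounting]
    refine Nat.pow_le_pow_left ?_ _
    refine (Multiset.toFinset_card_le _).trans ?_
    exact Polynomial.card_nthRoots k 1
  have hfin : (goodPairs k Q).Finite := by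
    refine (Finset.finite_toSet (Finset.range ⌈2 * √Q⌉₊ ×ˢ Finset.range ⌈2 * √Q⌉₊)).subset ?_
    rintro ⟨a, b⟩ ⟨-, -, -, hab, hb, -⟩
    simp only at hab hb
    have : b < ⌈2 * √Q⌉₊ := Nat.lt_ceil.2 hb
    simp only [Finset.coe_product, Finset.coe_range, Set.mem_prod, Set.mem_Iio]
    omega
  have hsub : (((S ×ˢ S).filter fun x : ℕ × ℕ => x.1 < x.2 ∧ f x.1 = f x.2 : Finset _) : Set (ℕ × ℕ))
      ⊆ goodPairs k Q := by
    rintro ⟨a, b⟩ hx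
    simp only [Finset.coe_filter, Finset.mem_product, Set.mem_ofPred_eq] at hx
    obtain ⟨⟨ha, hb⟩, hab, hfab⟩ := hx
    have ha' := mem_primesAP.1 ha
    have hb' := mem_primesAP.1 hb
    refine ⟨ha'.1, hb'.1, ha'.2.1, hab, hb'.2.2.1, ha'.2.2.2, hb'.2.2.2, fun p hp hpL => ?_⟩
    have hpP : p ∈ P := Nat.mem_primesLE.2 ⟨Nat.le_floor hpL, hp⟩
    exact tildePsi_eq_one hk ha'.1 hb'.1 hp (hlt a ha p hpL) (hlt b hb p hpL)
      (congrFun hfab ⟨p, hpP⟩)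
  have hN := Set.ncard_le_ncard hsub hfin
  rw [Set.ncard_coe_finset] at hN
  refine (card_sq_le_pairs S T f hf).trans ?_
  refine Nat.mul_le_mul hT (Nat.add_le_add_left (Nat.mul_le_mul_left 2 ?_) _)
  convert hN

set_option maxHeartbeats 1000000 in
/-- The theorem with `c = D + 1`, where `k ^ π(L) ≤ exp (D L / log L)` for `L = log Q`; the
remaining factor `exp (L / log L)` absorbs powers of `L` and constants. -/
lemma eventually_le_ncard_goodPairs {k : ℕ} (hk : 2 ≤ k) :
    ∃ c > (0 : ℝ), ∀ᶠ Q : ℝ in atTop,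
      Q * Real.exp (-c * Real.log Q / Real.log (Real.log Q)) ≤ ((goodPairs k Q).ncard : ℝ) := by
  obtain ⟨c, hc, hS⟩ := exists_primesAP_lower hk
  have hk1 : (1:ℝ) < k := by exact_mod_cast hk
  have hlogk : 0 < Real.log k := Real.log_pos hk1
  set D : ℝ := (Real.log 4 + 1) * Real.log k with hD
  have hD0 : 0 < D := by
    have := Real.log_pos (show (1:ℝ) < 4 by norm_num)
    positivity
  refine ⟨D + 1, by positivity, ?_⟩
  have hpi : ∀ᶠ Q : ℝ in atTop, (Nat.primeCounting ⌊Real.log Q⌋₊ : ℝ) ≤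
      (Real.log 4 + 1) * Real.log Q / Real.log (Real.log Q) :=
    Real.tendsto_log_atTop.eventually (Chebyshev.eventually_primeCounting_le one_pos)
  have hlogsq : ∀ᶠ L : ℝ in atTop, Real.log L ^ 2 ≤ L / 3 := by
    have := (isLittleO_pow_log_id_atTop (n := 2)).bound (show (0:ℝ) < 1 / 3 by norm_num)
    filter_upwards [this, eventually_ge_atTop 0] with L hL h0
    simp only [id, Real.norm_eq_abs, abs_of_nonneg h0, abs_of_nonneg (sq_nonneg (Real.log L))] at hL
    linarith
  filter_upwards [Real.tendsto_sqrt_atTop.eventually hS, hpi, Real.tendsto_log_atTop.eventually hlogsq,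
    Real.tendsto_log_atTop.eventually_ge_atTop (1 / c ^ 2),
    Real.tendsto_log_atTop.eventually_ge_atTop 3,
    Real.tendsto_log_atTop.eventually_ge_atTop (4 * Real.log c),
    (Real.tendsto_log_atTop.comp Real.tendsto_log_atTop).eventually_ge_atTop (4 * (1 + D)),
    eventually_gt_atTop 1] with Q hSQ hpiQ hlsq hLc hL3 hLlc hLL hQ1
  simp only [Function.comp] at hLL
  set L := Real.log Q with hL
  set E := L / Real.log L with hE
  have hQpos : 0 < Q := by linarith
  have hQexp : Q = Real.exp L := (Real.exp_log hQpos).symm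
  have hsqrt : √Q = Real.exp (L / 2) := by rw [hQexp, Real.exp_half]
  have hllpos : 0 < Real.log L := by linarith
  have hL0 : 0 < L := by linarith
  have hlogsqrt : Real.log √Q = L / 2 := by rw [hsqrt, Real.log_exp]
  have hLsqrt : L ≤ √Q := by
    rw [hsqrt]
    have := Real.quadratic_le_exp_of_nonneg (show 0 ≤ L / 2 by linarith)
    nlinarith
  set s : ℝ := ((primesAP k √Q).card : ℝ) with hs
  set T : ℝ := (k : ℝ) ^ (Nat.primeCounting ⌊L⌋₊) with hT
  set N : ℝ := ((goodPairs k Q).ncard : ℝ) with hN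
  have hmain : s ^ 2 ≤ T * (s + 2 * N) := by
    have := goodPairs_lower hk hLsqrt hL0.le
    rw [hs, hT, hN]
    exact_mod_cast this
  have hTpos : 0 < T := by positivity
  have hTle : T ≤ Real.exp (D * E) := by
    rw [hT, ← Real.rpow_natCast, Real.rpow_def_of_pos (by linarith)]
    refine Real.exp_le_exp.2 ?_
    calc Real.log k * (Nat.primeCounting ⌊L⌋₊ : ℝ)
        ≤ Real.log k * ((Real.log 4 + 1) * L / Real.log L) := by gcongr
      _ = D * E := by rw [hD, hE]; ring
  -- `L³ ≤ exp E` because `3 (log L)² ≤ L`.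
  have hE3 : L ^ 3 ≤ Real.exp E := by
    have h1 : 3 * Real.log L ≤ E := by
      rw [hE, le_div_iff₀ hllpos]; nlinarith
    calc L ^ 3 = Real.exp (3 * Real.log L) := by
          rw [show (3:ℝ) * Real.log L = ((3:ℕ):ℝ) * Real.log L by norm_num, Real.exp_nat_mul,
            Real.exp_log hL0]
      _ ≤ _ := Real.exp_le_exp.2 h1
  have hL2 : L ^ 2 ≤ c ^ 2 * Real.exp E := by
    rw [div_le_iff₀ (by positivity)] at hLc
    calc L ^ 2 ≤ (L * c ^ 2) * L ^ 2 := le_mul_of_one_le_left (by positivity) hLc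
      _ = c ^ 2 * L ^ 3 := by ring
      _ ≤ _ := by gcongr
  have hL1 : L ≤ c ^ 2 * Real.exp E := (le_self_pow₀ (by linarith) two_ne_zero).trans hL2
  have hEle : (1 + D) * E ≤ L / 4 := by
    rw [hE, mul_div_assoc', div_le_iff₀ hllpos]; nlinarith
  have hbig : c * Real.exp ((1 + D) * E) ≤ Real.exp (L / 2) := by
    calc c * Real.exp ((1 + D) * E) ≤ Real.exp (L / 4) * Real.exp (L / 4) := by
          gcongr
          rw [← Real.log_le_iff_le_exp hc]; linarith
      _ = Real.exp (L / 2) := by rw [← Real.exp_add]; ring_nf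
  have hslow : 2 * c * Real.exp (L / 2) / L ≤ s := by
    rw [hlogsqrt, hsqrt] at hSQ
    refine le_trans (le_of_eq ?_) hSQ
    field_simp
  -- The diagonal term `T * s` in `hmain` is at most `s² / 2`.
  have hsT : 2 * T ≤ s := by
    refine le_trans ?_ hslow
    rw [le_div_iff₀ hL0]
    calc 2 * T * L ≤ 2 * Real.exp (D * E) * (c ^ 2 * Real.exp E) := by
          gcongr
      _ = 2 * c * (c * Real.exp ((1 + D) * E)) := by
          rw [show (1 + D) * E = D * E + E by ring, Real.exp_add]; ring
      _ ≤ 2 * c * Real.exp (L / 2) := by gcongr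
  have hNlow : s ^ 2 ≤ 4 * T * N := by
    have hs0 : 0 ≤ s := Nat.cast_nonneg _
    have h6 := mul_le_mul_of_nonneg_right hsT hs0
    linear_combination 2 * hmain + h6
  have hs2 : (2 * c * Real.exp (L / 2) / L) ^ 2 ≤ s ^ 2 := by gcongr
  have hexp2 : Real.exp (L / 2) ^ 2 = Q := by
    rw [hQexp, ← Real.exp_nat_mul]; congr 1; push_cast; ring
  have hN0 : 0 ≤ N := Nat.cast_nonneg _
  rw [show -(D + 1) * L / Real.log L = -(D * E + E) by rw [hE]; ring, Real.exp_neg, Real.exp_add,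
    ← div_eq_mul_inv, div_le_iff₀ (by positivity)]
  have h7 : c ^ 2 * Q ≤ T * N * L ^ 2 := by
    have h8 := hs2.trans hNlow
    rw [div_pow, div_le_iff₀ (by positivity), mul_pow, hexp2] at h8
    linear_combination h8 / 4
  have h9 : c ^ 2 * Q ≤ c ^ 2 * (N * (Real.exp (D * E) * Real.exp E)) := by
    calc c ^ 2 * Q ≤ T * N * L ^ 2 := h7
      _ ≤ Real.exp (D * E) * N * (c ^ 2 * Real.exp E) := by gcongr
      _ = _ := by ring
  exact le_of_mul_le_mul_left h9 (by positivity)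

end

/-- Let `k ≥ 2`. There is `c_k > 0` such that for all sufficiently large `Q`, the number of
pairs `(q₁, q₂)` of primes with `√Q < q₁ < q₂ < 2√Q`, `q₁ ≡ q₂ ≡ 1 (mod k)`, and such that
`ψ_{q₁} ⋅ conj(ψ_{q₂})` mod `q₁q₂` takes the value `1` at every prime `p ≤ log Q`, is at
least `Q exp(−c_k log Q / log log Q)`. -/
theorem stmt_6 (k : ℕ) (hk : 2 ≤ k) :
    ∃ c > (0 : ℝ), ∃ Q₀ : ℝ, ∀ Q : ℝ, Q₀ ≤ Q →
      Q * Real.exp (-c * Real.log Q / Real.log (Real.log Q)) ≤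
        (Nat.card {qq : ℕ × ℕ // qq.1.Prime ∧ qq.2.Prime ∧
          Real.sqrt Q < (qq.1 : ℝ) ∧ qq.1 < qq.2 ∧ (qq.2 : ℝ) < 2 * Real.sqrt Q ∧
          qq.1 % k = 1 ∧ qq.2 % k = 1 ∧
          ∀ p : ℕ, p.Prime → (p : ℝ) ≤ Real.log Q →
            tildePsi k qq.1 qq.2 ((p : ℕ) : ZMod (qq.1 * qq.2)) = 1} : ℝ) := by
  obtain ⟨c, hc, h⟩ := eventually_le_ncard_goodPairs hk
  obtain ⟨Q₀, hQ₀⟩ := Filter.eventually_atTop.1 h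
  exact ⟨c, hc, Q₀, hQ₀⟩
end

section
/- Let δ ∈ {1, −1} and let ε(p) ∈ {1, −1} be given for each prime p. There exists an absolute constant c > 0 such that for all sufficiently large Q and every real y with 2 ≤ y ≤ log Q, the number of integers d that are squarefree, satisfy d ≡ 1 (mod 4), 0 < δd ≤ Q, are coprime to every prime p ≤ y, and satisfy χ_d(p) = ε(p) for all primes p ≤ y, is at least c·Q/(2^{π(y)}·log y). -/
/-!
Write `d = δ n` with `n > 0`. Prescribing `χ_d(2)` fixes `n` modulo `8`, and prescribing `χ_d(p)` for
the odd primes `p ≤ y` fixes the Jacobi symbols `(n / p) = η(p)`, so one has to count squarefree `n ≤ Q`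
in an odd class modulo `8` with given symbols.

The product `weight η T n = ∏_{p ∈ T} [p ∤ n] (1 + η(p) (n / p))`, with `T` the set of odd primes up
to `y`, is `2 ^ |T|` on the wanted `n` and `0` elsewhere. Expanding it gives `3 ^ |T|` sums of a symbol
`(n / l)` over multiples of some `a`, with `a`, `l` coprime divisors of `∏_{p ∈ T} p`. The terms with
`l = 1` add up to the main term `(Q / 8) ∏ (1 - 1 / p)`. The terms with `l > 1` are bounded by the
Pólya–Vinogradov inequality (`polya_vinogradov`): since `l ≤ 4 ^ y` and `y ≤ log Q`, one has
`√l ≤ Q ^ log 2`, while `3 ^ π(y) = Q ^ o(1)` by Chebyshev's bound for `π`. Hence `weight` is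
equidistributed with a power saving (`weight_sum`).

Non-squarefree `n` are removed by a sieve over odd `j ≥ 3` with `j ^ 2 ∣ n` (`sieve_bound`). As
`weight (j ^ 2 m) ≤ weight m` and `j ^ 2 ≡ 1 (mod 8)`, the multiples of `j ^ 2` contribute at most the
same sum up to `Q / j ^ 2`, and `∑ j ^ (-2)` over odd `j ≥ 3` is less than `1 / 4`. Finally
`∏_{p ≤ y} (1 - 1 / p)` is at least a constant over `log y` (`mertens_lower`), by comparison with the
Euler product of `ζ(1 + 1 / log y)`.
-/

open scoped Classical

/-- The Kronecker symbol `χ_d(n) = (d/n)` for squarefree `d ≡ 1 (mod 4)`: the completely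
multiplicative function with `χ_d(p) = (d/p)` (Jacobi symbol) for odd primes `p`, and
`χ_d(2) = 1` if `d ≡ 1 (mod 8)`, `χ_d(2) = -1` if `d ≡ 5 (mod 8)`. -/
def chiD (d : ℤ) (n : ℕ) : ℤ :=
  ((n.primeFactorsList).map fun p =>
    if p = 2 then (if d % 8 = 1 then 1 else -1) else jacobiSym d p).prod

/-! ### Pólya–Vinogradov for the Jacobi symbol -/

/-- The Jacobi symbol `(· / l)` as a complex Dirichlet character modulo `l`. -/
noncomputable def jacobiChar (l : ℕ) [NeZero l] : DirichletCharacter ℂ l where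
  toFun x := ((jacobiSym (x.val : ℤ) l : ℤ) : ℂ)
  map_one' := by
    have h : jacobiSym (((1 : ZMod l).val : ℕ) : ℤ) l = 1 := by
      rw [← Nat.cast_one (R := ZMod l), ZMod.val_natCast, Int.natCast_mod, ← jacobiSym.mod_left]
      exact jacobiSym.one_left l
    change ((jacobiSym (((1 : ZMod l).val : ℕ) : ℤ) l : ℤ) : ℂ) = 1
    rw [h, Int.cast_one]
  map_mul' x y := by
    have h : jacobiSym (((x * y : ZMod l).val : ℕ) : ℤ) l
        = jacobiSym (x.val : ℤ) l * jacobiSym (y.val : ℤ) l := by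
      rw [ZMod.val_mul, Int.natCast_mod, ← jacobiSym.mod_left, Nat.cast_mul, jacobiSym.mul_left]
    rw [h, Int.cast_mul]
  map_nonunit' x hx := by
    have h : jacobiSym (x.val : ℤ) l = 0 := by
      rw [jacobiSym.eq_zero_iff_not_coprime]
      intro h
      apply hx
      rw [← ZMod.natCast_zmod_val x, ZMod.isUnit_iff_coprime]
      exact_mod_cast h
    change ((jacobiSym (x.val : ℤ) l : ℤ) : ℂ) = 0
    rw [h, Int.cast_zero]

lemma jacobiChar_natCast (l : ℕ) [NeZero l] (n : ℕ) :
    jacobiChar l (n : ZMod l) = ((jacobiSym (n : ℤ) l : ℤ) : ℂ) := by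
  change ((jacobiSym (((n : ZMod l).val : ℕ) : ℤ) l : ℤ) : ℂ) = _
  rw [ZMod.val_natCast, Int.natCast_mod, ← jacobiSym.mod_left]

lemma jacobiChar_inv (l : ℕ) [NeZero l] : (jacobiChar l)⁻¹ = jacobiChar l := by
  ext u
  rw [MulChar.inv_apply_eq_inv']
  obtain ⟨n, hn⟩ : ∃ n : ℕ, (n : ZMod l) = u := ⟨(u : ZMod l).val, ZMod.natCast_zmod_val _⟩
  rw [← hn, jacobiChar_natCast]
  rcases jacobiSym.trichotomy (n : ℤ) l with h | h | h <;> simp [h]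

lemma exists_jacobiSym_eq_neg_one {p : ℕ} (hp : p.Prime) (hp2 : p ≠ 2) :
    ∃ a : ℕ, jacobiSym (a : ℤ) p = -1 := by
  have := Fact.mk hp
  obtain ⟨a, ha⟩ := quadraticChar_exists_neg_one (F := ZMod p) (by rwa [ZMod.ringChar_zmod_n])
  refine ⟨a.val, ?_⟩
  rw [← jacobiSym.legendreSym.to_jacobiSym, legendreSym]
  simpa using ha

/-- For odd squarefree `l` the Jacobi character is primitive: for each prime `p ∣ l` there is a
unit `≡ 1 (mod l / p)` which is a nonresidue modulo `p`. -/
lemma jacobiChar_isPrimitive {l : ℕ} [NeZero l] (hodd : Odd l) (hsq : Squarefree l) :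
    (jacobiChar l).IsPrimitive := by
  rw [DirichletCharacter.isPrimitive_def]
  by_contra hne
  obtain ⟨q, hq⟩ := DirichletCharacter.conductor_dvd_level (jacobiChar l)
  have hl : l ≠ 0 := NeZero.ne l
  have hq1 : q ≠ 1 := by rintro rfl; exact hne (by simpa using hq.symm)
  obtain ⟨p, hp, r, rfl⟩ := Nat.exists_prime_and_dvd hq1
  set c := (jacobiChar l).conductor with hc
  have hlp : l = p * (c * r) := by rw [hq]; ring
  have hp2 : p ≠ 2 := by
    rintro rfl
    rw [hlp] at hodd
    exact (Nat.not_even_iff_odd.mpr hodd) (even_two_mul _)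
  obtain ⟨a, ha⟩ := exists_jacobiSym_eq_neg_one hp hp2
  have hcop : Nat.Coprime p (c * r) := by
    apply Nat.coprime_of_squarefree_mul
    rwa [← hlp]
  obtain ⟨n, hn1, hn2⟩ := Nat.chineseRemainder hcop a 1
  have : NeZero p := ⟨hp.ne_zero⟩
  have : NeZero (c * r) := ⟨by rintro h; rw [h] at hlp; exact hl (by simpa using hlp)⟩
  have hj : jacobiSym (n : ℤ) l = -1 := by
    rw [hlp, jacobiSym.mul_right, jacobiSym.mod_left (n : ℤ) p,
      jacobiSym.mod_left (n : ℤ) (c * r)]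
    rw [show (n : ℤ) % (p : ℕ) = (a : ℤ) % (p : ℕ) by exact_mod_cast hn1,
      show (n : ℤ) % ((c * r : ℕ) : ℤ) = (1 : ℤ) % ((c * r : ℕ) : ℤ) by exact_mod_cast hn2,
      ← jacobiSym.mod_left, ← jacobiSym.mod_left, ha, jacobiSym.one_left]
    norm_num
  have hu : IsUnit (n : ZMod l) := by
    rw [ZMod.isUnit_iff_coprime]
    have : jacobiSym (n : ℤ) l ≠ 0 := by rw [hj]; norm_num
    rw [Ne, jacobiSym.eq_zero_iff_not_coprime, not_not] at this
    simpa using this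
  have hf := DirichletCharacter.factorsThrough_conductor (jacobiChar l)
  have hcl := DirichletCharacter.conductor_dvd_level (jacobiChar l)
  rw [DirichletCharacter.factorsThrough_iff_ker_unitsMap hcl] at hf
  have hk : hu.unit ∈ (ZMod.unitsMap hcl).ker := by
    rw [MonoidHom.mem_ker, ← Units.val_inj, ZMod.unitsMap_def, Units.coe_map]
    simp only [IsUnit.unit_spec, MonoidHom.coe_coe, map_natCast, Units.val_one]
    rw [← Nat.cast_one, ZMod.natCast_eq_natCast_iff]
    exact hn2.of_mul_right r
  have := hf hk
  rw [MonoidHom.mem_ker, ← Units.val_inj, MulChar.coe_toUnitHom] at this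
  simp only [IsUnit.unit_spec, Units.val_one, jacobiChar_natCast, hj] at this
  norm_num at this

/-- The finite Fourier expansion of the Jacobi character. -/
lemma jacobiChar_fourier {l : ℕ} [NeZero l] (hodd : Odd l) (hsq : Squarefree l) (a : ZMod l) :
    ∑ x, jacobiChar l x * ZMod.stdAddChar (a * x)
      = jacobiChar l a * gaussSum (jacobiChar l) ZMod.stdAddChar := by
  have := gaussSum_mulShift_of_isPrimitive (ZMod.stdAddChar (N := l))
    (jacobiChar_isPrimitive hodd hsq) a
  rw [jacobiChar_inv] at this
  rw [← this, gaussSum]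
  simp [AddChar.mulShift_apply]

/-- Orthogonality gives `g ^ 2 = l χ(-1)` for the Gauss sum `g`, since `χ` is real. -/
lemma norm_gaussSum_jacobiChar {l : ℕ} [NeZero l] (hodd : Odd l) (hsq : Squarefree l) :
    ‖gaussSum (jacobiChar l) ZMod.stdAddChar‖ = √l := by
  set g := gaussSum (jacobiChar l) ZMod.stdAddChar with hg
  -- apply the Fourier expansion twice and use orthogonality of additive characters
  have h : g * g = l * jacobiChar l (-1) := by
    calc g * g = ∑ x, jacobiChar l x * ZMod.stdAddChar (1 * x) * g := by
          rw [← Finset.sum_mul, jacobiChar_fourier hodd hsq, map_one, one_mul]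
      _ = ∑ x, ∑ y, jacobiChar l y * ZMod.stdAddChar (x * (y + 1)) := by
          refine Finset.sum_congr rfl fun x _ => ?_
          rw [mul_right_comm, ← jacobiChar_fourier hodd hsq, Finset.sum_mul]
          refine Finset.sum_congr rfl fun y _ => ?_
          rw [mul_assoc, ← AddChar.map_add_eq_mul]
          ring_nf
      _ = ∑ y, jacobiChar l y * ∑ x, ZMod.stdAddChar (x * (y + 1)) := by
          rw [Finset.sum_comm]
          simp_rw [Finset.mul_sum]
      _ = l * jacobiChar l (-1) := by
          simp_rw [AddChar.sum_mulShift _ (ZMod.isPrimitive_stdAddChar l)]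
          rw [Finset.sum_eq_single (-1)]
          · simp [mul_comm]
          · intro b _ hb
            rw [if_neg (fun h => hb (eq_neg_of_add_eq_zero_left h))]
            simp
          · simp
  have h1 : ‖jacobiChar l (-1)‖ = 1 := by
    simpa using (jacobiChar l).unit_norm_eq_one (-1)
  have h2 : ‖g‖ * ‖g‖ = l := by rw [← norm_mul, h, norm_mul, h1]; simp
  rw [← h2, Real.sqrt_mul_self (norm_nonneg _)]

/-- Jordan's inequality `sin t ≥ 2 t / π` on `[0, π / 2]`, in the form `|e(k / l) - 1| ≥ 4 ‖k / l‖`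
with `‖·‖` the distance to the nearest integer. -/
lemma norm_stdAddChar_sub_one_ge {l : ℕ} [NeZero l] (x : ZMod l) :
    4 * (min x.val (l - x.val) : ℝ) / l ≤ ‖ZMod.stdAddChar x - 1‖ := by
  have hl : (0 : ℝ) < l := by exact_mod_cast NeZero.pos l
  set k := x.val with hk
  have hkl : (k : ℝ) ≤ l := by exact_mod_cast (ZMod.val_lt x).le
  have h1 : ZMod.stdAddChar x = Complex.exp (Complex.I * ((2 * Real.pi * k / l : ℝ) : ℂ)) := by
    have : x = ((k : ℤ) : ZMod l) := by rw [hk]; simp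
    rw [this, ZMod.stdAddChar_coe]
    congr 1
    push_cast
    ring
  rw [h1, Complex.norm_exp_I_mul_ofReal_sub_one, norm_mul, Real.norm_ofNat]
  have h2 : 2 * (min (k : ℝ) (l - k)) / l ≤ Real.sin (2 * Real.pi * k / l / 2) := by
    have e1 : 2 * Real.pi * k / l / 2 = Real.pi * (k / l) := by ring
    rw [e1]
    have hk0 : (0 : ℝ) ≤ k / l := by positivity
    have hk1 : (k : ℝ) / l ≤ 1 := (div_le_one hl).mpr hkl
    rcases le_total ((k : ℝ) / l) (1 / 2) with h | h
    · have := Real.mul_le_sin (x := Real.pi * (k / l)) (by positivity)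
        (by nlinarith [Real.pi_pos])
      refine le_trans ?_ this
      have : 2 / Real.pi * (Real.pi * ((k : ℝ) / l)) = 2 * k / l := by
        field_simp
      rw [this]
      gcongr
      exact min_le_left _ _
    · have := Real.mul_le_sin (x := Real.pi - Real.pi * (k / l)) (by nlinarith [Real.pi_pos])
        (by nlinarith [Real.pi_pos])
      rw [Real.sin_pi_sub] at this
      refine le_trans ?_ this
      have : 2 / Real.pi * (Real.pi - Real.pi * ((k : ℝ) / l)) = 2 * (l - k) / l := by
        field_simp
      rw [this]
      gcongr
      exact min_le_right _ _
  have h3 := h2.trans (le_abs_self _)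
  rw [Real.norm_eq_abs]
  calc _ = 2 * (2 * (min (k : ℝ) (l - k)) / l) := by ring
    _ ≤ _ := by gcongr

/-- A geometric sum of `l`-th roots of unity is bounded by the inverse distance of the frequency
to the nearest integer. -/
lemma norm_sum_stdAddChar_le {l : ℕ} [NeZero l] {x : ZMod l} (hx : x ≠ 0) (A N : ℕ) :
    ‖∑ n ∈ Finset.range N, ZMod.stdAddChar (((A + n : ℕ) : ZMod l) * x)‖
      ≤ l / 2 * ((x.val : ℝ)⁻¹ + ((l - x.val : ℕ) : ℝ)⁻¹) := by
  have hl : (0 : ℝ) < l := by exact_mod_cast NeZero.pos l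
  set z := ZMod.stdAddChar x with hz
  have hge := norm_stdAddChar_sub_one_ge x
  have hlt := ZMod.val_lt x
  have hk : 0 < x.val := Nat.pos_of_ne_zero (by rwa [Ne, ZMod.val_eq_zero])
  have hk' : (0 : ℝ) < x.val := by exact_mod_cast hk
  have hlk : (0 : ℝ) < (l - x.val : ℝ) := by
    rw [sub_pos]; exact_mod_cast hlt
  have hm : 0 < min (x.val : ℝ) (l - x.val) := lt_min hk' hlk
  have hpos : 0 < ‖z - 1‖ := lt_of_lt_of_le (by positivity) hge
  have hz1 : z ≠ 1 := by
    intro h; rw [h] at hpos; simp at hpos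
  have hzn : ‖z‖ = 1 := AddChar.norm_apply _ _
  have h1 : ∑ n ∈ Finset.range N, ZMod.stdAddChar (((A + n : ℕ) : ZMod l) * x)
      = z ^ A * ((z ^ N - 1) / (z - 1)) := by
    rw [← geom_sum_eq hz1, Finset.mul_sum]
    refine Finset.sum_congr rfl fun n _ => ?_
    rw [← pow_add, hz, ← AddChar.map_nsmul_eq_pow, nsmul_eq_mul]
  rw [h1, norm_mul, norm_pow, hzn, one_pow, one_mul, norm_div]
  have h2 : ‖z ^ N - 1‖ ≤ 2 := by
    refine (norm_sub_le _ _).trans ?_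
    rw [norm_pow, hzn, one_pow, norm_one]; norm_num
  rw [Nat.cast_sub hlt.le]
  calc ‖z ^ N - 1‖ / ‖z - 1‖ ≤ 2 / (4 * (min x.val (l - x.val) : ℝ) / l) := by gcongr
    _ = l / 2 * (min (x.val : ℝ) (l - x.val))⁻¹ := by field_simp; norm_num
    _ ≤ _ := by
      gcongr
      rcases min_choice (x.val : ℝ) (l - x.val) with h | h <;> rw [h]
      · linarith [inv_pos.mpr hlk]
      · linarith [inv_pos.mpr hk']

lemma sum_range_inv_le (l : ℕ) :
    ∑ k ∈ Finset.range l, ((k : ℝ)⁻¹ + ((l - k : ℕ) : ℝ)⁻¹) ≤ 2 * (1 + Real.log l) := by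
  have hH : ∑ k ∈ Finset.range l, ((k + 1 : ℕ) : ℝ)⁻¹ ≤ 1 + Real.log l := by
    have := harmonic_le_one_add_log l
    rw [harmonic] at this
    push_cast at this ⊢
    exact this
  rw [Finset.sum_add_distrib, two_mul]
  refine add_le_add ?_ ?_
  · rcases l with _ | m
    · simp
    · rw [Finset.sum_range_succ']
      refine le_trans ?_ hH
      rw [Finset.sum_range_succ]
      simp only [Nat.cast_zero, inv_zero, add_zero]
      have : (0 : ℝ) ≤ ((m + 1 : ℕ) : ℝ)⁻¹ := by positivity
      linarith
  · refine le_trans (le_of_eq ?_) hH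
    rw [← Finset.sum_range_reflect]
    refine Finset.sum_congr rfl fun k hk => ?_
    rw [Finset.mem_range] at hk
    congr 2
    omega

/-- The Pólya–Vinogradov inequality over an arbitrary interval `[A, A + N)`, for
the Jacobi symbol modulo an odd squarefree `l > 1`. -/
lemma polya_vinogradov {l : ℕ} (hodd : Odd l) (hsq : Squarefree l) (hl1 : 1 < l) (A N : ℕ) :
    |∑ n ∈ Finset.range N, ((jacobiSym ((A + n : ℕ) : ℤ) l : ℤ) : ℝ)|
      ≤ √l * (1 + Real.log l) := by
  have : NeZero l := ⟨by omega⟩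
  have hl : (0 : ℝ) < l := by exact_mod_cast NeZero.pos l
  set S : ℝ := ∑ n ∈ Finset.range N, ((jacobiSym ((A + n : ℕ) : ℤ) l : ℤ) : ℝ) with hS
  set g := gaussSum (jacobiChar l) ZMod.stdAddChar with hg
  have hgn : ‖g‖ = √l := norm_gaussSum_jacobiChar hodd hsq
  have h1 : (S : ℂ) * g = ∑ x, jacobiChar l x *
      ∑ n ∈ Finset.range N, ZMod.stdAddChar (((A + n : ℕ) : ZMod l) * x) := by
    simp_rw [Finset.mul_sum]
    rw [Finset.sum_comm, hS]
    push_cast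
    rw [Finset.sum_mul]
    refine Finset.sum_congr rfl fun n _ => ?_
    have := jacobiChar_fourier hodd hsq ((A + n : ℕ) : ZMod l)
    rw [jacobiChar_natCast] at this
    push_cast at this ⊢
    rw [this]
  have h0 : jacobiChar l 0 = 0 := by
    have : Nontrivial (ZMod l) := ZMod.nontrivial_iff.mpr (by omega)
    exact MulChar.map_zero _
  have h2 : ‖(S : ℂ) * g‖ ≤ ∑ x : ZMod l, l / 2 * ((x.val : ℝ)⁻¹ + ((l - x.val : ℕ) : ℝ)⁻¹) := by
    rw [h1]
    refine norm_sum_le_of_le _ fun x _ => ?_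
    by_cases hx : x = 0
    · rw [hx, h0, zero_mul, norm_zero]; positivity
    · rw [norm_mul]
      refine le_trans (mul_le_of_le_one_left (norm_nonneg _) ?_) (norm_sum_stdAddChar_le hx A N)
      exact DirichletCharacter.norm_le_one _ _
  have h3 : ∑ x : ZMod l, (l : ℝ) / 2 * ((x.val : ℝ)⁻¹ + ((l - x.val : ℕ) : ℝ)⁻¹)
      ≤ l * (1 + Real.log l) := by
    rw [← Finset.mul_sum]
    have : ∑ x : ZMod l, ((x.val : ℝ)⁻¹ + ((l - x.val : ℕ) : ℝ)⁻¹)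
        = ∑ k ∈ Finset.range l, ((k : ℝ)⁻¹ + ((l - k : ℕ) : ℝ)⁻¹) := by
      refine Finset.sum_bij (fun x _ => x.val) ?_ ?_ ?_ ?_
      · intro x _; exact Finset.mem_range.mpr (ZMod.val_lt x)
      · intro x _ y _ h; exact ZMod.val_injective l h
      · intro k hk
        exact ⟨(k : ZMod l), Finset.mem_univ _, ZMod.val_cast_of_lt (Finset.mem_range.mp hk)⟩
      · intro x _; rfl
    rw [this]
    have := sum_range_inv_le l
    nlinarith
  -- `|S| √l ≤ l (1 + log l)`; divide by `√l`
  have h4 := h2.trans h3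
  rw [norm_mul, hgn, Complex.norm_real, Real.norm_eq_abs] at h4
  have hs : 0 < √(l : ℝ) := Real.sqrt_pos.mpr hl
  have hss : √(l : ℝ) * √(l : ℝ) = l := Real.mul_self_sqrt hl.le
  refine le_of_mul_le_mul_right ?_ hs
  calc |S| * √l ≤ l * (1 + Real.log l) := h4
    _ = √l * (1 + Real.log l) * √l := by nth_rewrite 1 [← hss]; ring

/-! ### Equidistribution of the weight -/

lemma sum_filter_mod_eq (N q r : ℕ) (hr : r < q) (g : ℕ → ℝ) :
    ∑ n ∈ (Finset.range (N + 1)).filter (fun n => n % q = r), g n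
      = ∑ m ∈ Finset.range ((N + q - r) / q), g (q * m + r) := by
  have hq : 0 < q := by omega
  symm
  refine Finset.sum_bij (fun m _ => q * m + r) ?_ ?_ ?_ ?_
  · intro m hm
    rw [Finset.mem_range, Nat.lt_iff_add_one_le, Nat.le_div_iff_mul_le hq] at hm
    rw [Finset.mem_filter, Finset.mem_range]
    refine ⟨?_, ?_⟩
    · have : (m + 1) * q = q * m + q := by ring
      omega
    · rw [Nat.mul_add_mod, Nat.mod_eq_of_lt hr]
  · intro m _ m' _ h
    have : q * m = q * m' := by simpa using h
    exact Nat.eq_of_mul_eq_mul_left hq this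
  · intro n hn
    rw [Finset.mem_filter, Finset.mem_range] at hn
    refine ⟨n / q, ?_, ?_⟩
    · rw [Finset.mem_range, Nat.lt_iff_add_one_le, Nat.le_div_iff_mul_le hq]
      have h1 := Nat.div_add_mod n q
      have : (n / q + 1) * q = q * (n / q) + q := by ring
      omega
    · have h1 := Nat.div_add_mod n q
      rw [← hn.2]; exact h1
  · intro m _; rfl

/-- `(N + q - r) / q` is the number of `n ≤ N` (including `0`) with `n ≡ r (mod q)`. -/
lemma abs_count_sub_le (N q r : ℕ) (hr : r < q) :
    |(((N + q - r) / q : ℕ) : ℝ) - N / q| ≤ 1 := by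
  have hq : 0 < q := by omega
  have hq' : (0 : ℝ) < q := by exact_mod_cast hq
  set K := (N + q - r) / q with hK
  have hdm := Nat.div_add_mod (N + q - r) q
  have hm := Nat.mod_lt (N + q - r) hq
  rw [← hK] at hdm
  have h1 : q * K ≤ N + q := by omega
  have h2 : N ≤ q * K + q := by omega
  have h1' : (q : ℝ) * K ≤ N + q := by exact_mod_cast h1
  have h2' : (N : ℝ) ≤ q * K + q := by exact_mod_cast h2
  rw [abs_le]
  constructor
  · have : (N : ℝ) / q ≤ K + 1 := by rw [div_le_iff₀ hq']; nlinarith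
    linarith
  · have : (K : ℝ) - 1 ≤ N / q := by rw [le_div_iff₀ hq']; nlinarith
    linarith

/-- A sum of Jacobi symbols along a progression `n ≡ r (mod q)` with `q` coprime to `l`
reduces, on dividing by `q` modulo `l`, to a sum over consecutive integers. -/
lemma abs_sum_jacobiSym_progression_le {l : ℕ} (hodd : Odd l) (hsq : Squarefree l) (hl1 : 1 < l)
    {q : ℕ} (hq : q.Coprime l) (r K : ℕ) :
    |∑ m ∈ Finset.range K, ((jacobiSym ((q * m + r : ℕ) : ℤ) l : ℤ) : ℝ)|
      ≤ √l * (1 + Real.log l) := by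
  have : NeZero l := ⟨by omega⟩
  obtain ⟨v, hv⟩ : ∃ v : ℕ, ((q * v : ℕ) : ZMod l) = (r : ℕ) := by
    refine ⟨((r : ZMod l) * (q : ZMod l)⁻¹).val, ?_⟩
    rw [Nat.cast_mul, ZMod.natCast_zmod_val, mul_left_comm, ZMod.coe_mul_inv_eq_one q hq, mul_one]
  have key : ∀ m : ℕ, jacobiSym ((q * m + r : ℕ) : ℤ) l
      = jacobiSym (q : ℤ) l * jacobiSym ((v + m : ℕ) : ℤ) l := by
    intro m
    rw [← jacobiSym.mul_left, jacobiSym.mod_left, jacobiSym.mod_left ((q : ℤ) * _)]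
    congr 1
    have : ((q * m + r : ℕ) : ZMod l) = ((q * (v + m) : ℕ) : ZMod l) := by
      rw [mul_add, Nat.cast_add, Nat.cast_add, hv, add_comm]
    rw [ZMod.natCast_eq_natCast_iff] at this
    exact_mod_cast this
  simp_rw [key]
  push_cast
  rw [← Finset.mul_sum, abs_mul]
  refine le_trans (mul_le_of_le_one_left (abs_nonneg _) ?_)
    (by exact_mod_cast polya_vinogradov hodd hsq hl1 v K)
  rcases jacobiSym.trichotomy (q : ℤ) l with h | h | h <;> simp [h]

/-- The sum of `(n / l)` over the multiples `n ≤ N` of `a` with `n ≡ s (mod 8)`. The two congruences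
merge into one modulo `8 a`; there is a main term only when `l = 1`. -/
lemma base_estimate {s N a l : ℕ} (hs : s < 8) (ha : Odd a) (hl : Odd l)
    (hsq : Squarefree l) (hal : a.Coprime l) {E : ℝ} (hE1 : 1 ≤ E)
    (hE : √l * (1 + Real.log l) ≤ E) :
    |∑ n ∈ (Finset.range (N + 1)).filter (fun n => n % 8 = s),
        (if a ∣ n then ((jacobiSym (n : ℤ) l : ℤ) : ℝ) else 0)
      - (if l = 1 then (N : ℝ) / (8 * a) else 0)| ≤ E := by
  have h8 : ∀ {b : ℕ}, Odd b → Nat.Coprime 8 b := fun hb => by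
    rw [show 8 = 2 ^ 3 by norm_num]
    exact Nat.Coprime.pow_left 3 ((Nat.coprime_two_left).mpr hb)
  have ha0 : 0 < a := ha.pos
  obtain ⟨r, hr, hr1, hr2⟩ : ∃ r < 8 * a, r ≡ s [MOD 8] ∧ r ≡ 0 [MOD a] :=
    ⟨Nat.chineseRemainder (h8 ha) s 0, Nat.chineseRemainder_lt_mul _ _ _ (by norm_num) ha0.ne',
      (Nat.chineseRemainder (h8 ha) s 0).2⟩
  have hiff : ∀ n : ℕ, (n % 8 = s ∧ a ∣ n) ↔ n % (8 * a) = r := by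
    intro n
    have e1 : n % 8 = s ↔ n ≡ r [MOD 8] := by
      unfold Nat.ModEq at hr1 ⊢
      rw [hr1, Nat.mod_eq_of_lt hs]
    have e2 : a ∣ n ↔ n ≡ r [MOD a] := by
      rw [← Nat.modEq_zero_iff_dvd]
      exact ⟨fun h => h.trans hr2.symm, fun h => h.trans hr2⟩
    rw [e1, e2, Nat.modEq_and_modEq_iff_modEq_mul (h8 ha)]
    unfold Nat.ModEq
    rw [Nat.mod_eq_of_lt hr]
  rw [← Finset.sum_filter, Finset.filter_filter]
  simp_rw [hiff]
  rw [sum_filter_mod_eq N (8 * a) r hr]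
  by_cases h1 : l = 1
  · subst h1
    simp only [jacobiSym.one_right, Int.cast_one, Finset.sum_const, Finset.card_range,
      nsmul_eq_mul, mul_one, if_true]
    have := abs_count_sub_le N (8 * a) r hr
    push_cast at this
    exact this.trans hE1
  · rw [if_neg h1, sub_zero]
    have hl1 : 1 < l := lt_of_le_of_ne hl.pos (Ne.symm h1)
    exact (abs_sum_jacobiSym_progression_le hl hsq hl1 ((h8 hl).mul_left hal) r _).trans hE

/-- The weight `∏_{p ∈ T} [p ∤ n] (1 + η(p) (n / p))`; for signs `η(p)` it equals `2 ^ |T|` when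
`(n / p) = η(p)` for every `p ∈ T`, and `0` otherwise. -/
noncomputable def weight (η : ℕ → ℤ) (T : Finset ℕ) (n : ℕ) : ℝ :=
  ∏ p ∈ T, (1 - (if p ∣ n then 1 else 0) + (η p : ℝ) * ((jacobiSym (n : ℤ) p : ℤ) : ℝ))

/-- Expanding the weight one prime at a time, each prime either does nothing, joins the divisor
`a`, or joins the modulus `l`; only the terms with `l = 1` have a main term. -/
lemma weight_sum_aux (η : ℕ → ℤ) (s N : ℕ) (hs : s < 8) {M E : ℝ} (hE1 : 1 ≤ E)
    (hE : ∀ l : ℕ, 1 ≤ l → (l : ℝ) ≤ M → √l * (1 + Real.log l) ≤ E) (T : Finset ℕ)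
    (hη : ∀ p ∈ T, η p = 1 ∨ η p = -1) :
    (∀ p ∈ T, p.Prime ∧ p ≠ 2) → ∀ a l : ℕ, Odd a → Odd l → Squarefree l → a.Coprime l →
      (∀ p ∈ T, p.Coprime (a * l)) → ((l * ∏ p ∈ T, p : ℕ) : ℝ) ≤ M →
    |∑ n ∈ (Finset.range (N + 1)).filter (fun n => n % 8 = s),
        (if a ∣ n then ((jacobiSym (n : ℤ) l : ℤ) : ℝ) else 0) * weight η T n
      - (if l = 1 then (N : ℝ) / (8 * a) * ∏ p ∈ T, (1 - 1 / (p : ℝ)) else 0)|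
      ≤ 3 ^ T.card * E := by
  -- For `p ∉ T` the factor at `p` splits the sum as `S(a, l) - S(p a, l) ± S(a, p l)`, whence the
  -- `3 ^ |T|` in the error and the factor `1 - 1 / p` in the main term.
  induction T using Finset.induction_on with
  | empty =>
    intro _ a l ha hl hsq hal _ hM
    simpa [weight] using base_estimate (N := N) hs ha hl hsq hal hE1
      (hE l hl.pos (by simpa using hM))
  | insert p T hpT ih =>
    intro hT a l ha hl hsq hal hcop hM
    have hp := (hT p (Finset.mem_insert_self _ _)).1
    have hp2 := (hT p (Finset.mem_insert_self _ _)).2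
    have hpodd : Odd p := hp.odd_of_ne_two hp2
    have hT' : ∀ q ∈ T, q.Prime ∧ q ≠ 2 := fun q hq => hT q (Finset.mem_insert_of_mem hq)
    have hcT : ∀ q ∈ T, q.Coprime (a * l) := fun q hq => hcop q (Finset.mem_insert_of_mem hq)
    have hcp := hcop p (Finset.mem_insert_self _ _)
    have hqp : ∀ q ∈ T, q.Coprime p := fun q hq => by
      rw [Nat.coprime_primes (hT' q hq).1 hp]; rintro rfl; exact hpT hq
    have ih' := ih (fun q hq => hη q (Finset.mem_insert_of_mem hq)) hT'
    have hp1 : 1 ≤ p := hp.pos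
    rw [Finset.prod_insert hpT] at hM
    have hP0 : 0 ≤ ((l * ∏ q ∈ T, q : ℕ) : ℝ) := by positivity
    have hMl : ((l * ∏ q ∈ T, q : ℕ) : ℝ) ≤ M := by
      refine le_trans ?_ hM
      norm_cast
      rw [mul_left_comm]
      exact Nat.le_mul_of_pos_left _ hp1
    have hcpa : p.Coprime a := hcp.coprime_mul_right_right
    have hcpl : p.Coprime l := hcp.coprime_mul_left_right
    have h1 := ih' a l ha hl hsq hal hcT hMl
    have h2 := ih' (p * a) l (hpodd.mul ha) hl hsq (hcpl.mul_left hal)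
      (fun q hq => by rw [mul_assoc]; exact (hqp q hq).mul_right (hcT q hq)) hMl
    have h3 := ih' a (p * l) ha (hpodd.mul hl)
      ((Nat.squarefree_mul hcpl).mpr ⟨hp.squarefree, hsq⟩) (hcpa.symm.mul_right hal)
      (fun q hq => by rw [mul_left_comm]; exact (hqp q hq).mul_right (hcT q hq))
      (by rw [mul_left_comm, ← mul_assoc] at hM; exact hM)
    rw [if_neg (by intro h; exact hp.one_lt.ne' (Nat.eq_one_of_mul_eq_one_right h)),
      sub_zero] at h3
    have hηp : |(η p : ℝ)| ≤ 1 := by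
      rcases hη p (Finset.mem_insert_self _ _) with h | h <;> simp [h]
    set A := (Finset.range (N + 1)).filter (fun n => n % 8 = s)
    set S1 := ∑ n ∈ A, (if a ∣ n then ((jacobiSym (n : ℤ) l : ℤ) : ℝ) else 0) * weight η T n
    set S2 := ∑ n ∈ A, (if p * a ∣ n then ((jacobiSym (n : ℤ) l : ℤ) : ℝ) else 0) * weight η T n
    set S3 := ∑ n ∈ A, (if a ∣ n then ((jacobiSym (n : ℤ) (p * l) : ℤ) : ℝ) else 0)
      * weight η T n
    have hsum : ∑ n ∈ A, (if a ∣ n then ((jacobiSym (n : ℤ) l : ℤ) : ℝ) else 0)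
        * weight η (insert p T) n = S1 - S2 + η p * S3 := by
      rw [Finset.mul_sum, ← Finset.sum_sub_distrib, ← Finset.sum_add_distrib]
      refine Finset.sum_congr rfl fun n _ => ?_
      have hd : p * a ∣ n ↔ p ∣ n ∧ a ∣ n :=
        ⟨fun h => ⟨dvd_of_mul_right_dvd h, dvd_of_mul_left_dvd h⟩,
          fun h => hcpa.mul_dvd_of_dvd_of_dvd h.1 h.2⟩
      have : NeZero p := ⟨hp.ne_zero⟩
      have : NeZero l := ⟨hl.pos.ne'⟩
      rw [weight, Finset.prod_insert hpT, ← weight, jacobiSym.mul_right]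
      by_cases h1 : p ∣ n <;> by_cases h2 : a ∣ n <;> simp [hd, h1, h2] <;> ring
    rw [hsum, Finset.prod_insert hpT, Finset.card_insert_of_notMem hpT]
    have hmain : (if l = 1 then (N : ℝ) / (8 * a) * ((1 - 1 / (p : ℝ)) *
        ∏ q ∈ T, (1 - 1 / (q : ℝ))) else 0)
        = (if l = 1 then (N : ℝ) / (8 * a) * ∏ q ∈ T, (1 - 1 / (q : ℝ)) else 0)
          - (if l = 1 then (N : ℝ) / (8 * (p * a : ℕ)) * ∏ q ∈ T, (1 - 1 / (q : ℝ)) else 0) := by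
      have : (p : ℝ) ≠ 0 := by exact_mod_cast hp.ne_zero
      have : (a : ℝ) ≠ 0 := by exact_mod_cast ha.pos.ne'
      split_ifs
      · push_cast; field_simp
      · simp
    rw [hmain]
    have h3' : |(η p : ℝ) * S3| ≤ 3 ^ T.card * E := by
      rw [abs_mul]
      exact (mul_le_of_le_one_left (abs_nonneg _) hηp).trans h3
    rw [abs_le] at h1 h2 h3' ⊢
    rw [pow_succ]
    constructor <;> linarith [h1.1, h1.2, h2.1, h2.2, h3'.1, h3'.2]

/-! ### A Mertens-type lower bound -/

/-- The comparison of `(m + 1) ^ (-(1 + η))` with `∫ x ^ (-(1 + η))` over `[m, m + 1]`, which makes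
the sum for `ζ(1 + η)` telescope. -/
lemma rpow_neg_le_sub {η : ℝ} (hη : 0 < η) {m : ℝ} (hm : 0 < m) :
    (m + 1) ^ (-(1 + η)) ≤ (m ^ (-η) - (m + 1) ^ (-η)) / η := by
  rw [le_div_iff₀ hη]
  have hm1 : 0 < m + 1 := by linarith
  have h1 : 1 + η / (m + 1) ≤ ((m + 1) / m) ^ η := by
    have e : Real.log ((m + 1) / m) ≥ 1 / (m + 1) := by
      have := Real.one_sub_inv_le_log_of_pos (x := (m + 1) / m) (by positivity)
      refine le_trans (le_of_eq ?_) this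
      field_simp
      ring
    rw [Real.rpow_def_of_pos (by positivity)]
    have := Real.add_one_le_exp (Real.log ((m + 1) / m) * η)
    have h2 : 1 / (m + 1) * η ≤ Real.log ((m + 1) / m) * η := by gcongr
    have h3 : η / (m + 1) = 1 / (m + 1) * η := by ring
    linarith
  have h2 : m ^ (-η) = (m + 1) ^ (-η) * ((m + 1) / m) ^ η := by
    rw [Real.div_rpow hm1.le hm.le, Real.rpow_neg hm.le, Real.rpow_neg hm1.le]
    have := Real.rpow_pos_of_pos hm η
    have := Real.rpow_pos_of_pos hm1 η
    field_simp
  have h3 : (m + 1) ^ (-(1 + η)) = (m + 1) ^ (-η) * (1 / (m + 1)) := by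
    rw [show -(1 + η) = -η + (-1) by ring, Real.rpow_add hm1, Real.rpow_neg_one, one_div]
  rw [h2, h3]
  have h4 := Real.rpow_pos_of_pos hm1 (-η)
  have : (m + 1) ^ (-η) * (1 + η / (m + 1)) ≤ (m + 1) ^ (-η) * ((m + 1) / m) ^ η := by gcongr
  have e : (m + 1) ^ (-η) * (1 + η / (m + 1))
    = (m + 1) ^ (-η) + (m + 1) ^ (-η) * (1 / (m + 1)) * η := by ring
  linarith

lemma sum_Icc_rpow_le {η : ℝ} (hη : 0 < η) (N : ℕ) :
    ∑ n ∈ Finset.Icc 1 N, (n : ℝ) ^ (-(1 + η)) ≤ 1 + 1 / η := by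
  have key : ∀ N : ℕ, ∑ n ∈ Finset.Icc 1 (N + 1), (n : ℝ) ^ (-(1 + η))
      ≤ 1 + (1 - ((N + 1 : ℕ) : ℝ) ^ (-η)) / η := by
    intro N
    induction N with
    | zero => simp
    | succ k ih =>
      rw [Finset.sum_Icc_succ_top (by omega)]
      have := rpow_neg_le_sub hη (m := ((k + 1 : ℕ) : ℝ)) (by positivity)
      have e : (((k + 1 + 1 : ℕ)) : ℝ) = ((k + 1 : ℕ) : ℝ) + 1 := by push_cast; ring
      rw [e]
      refine (add_le_add ih this).trans (le_of_eq ?_)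
      ring
  rcases N with _ | N
  · simp; positivity
  · refine (key N).trans ?_
    have : (0 : ℝ) ≤ ((N + 1 : ℕ) : ℝ) ^ (-η) := by positivity
    gcongr
    linarith

/-- The truncated Euler product for `ζ(1 + η)` is a sum of `m ^ (-(1 + η))` over smooth `m`, so it is
at most `1 + 1 / η`. -/
lemma prod_primesBelow_rpow_le {η : ℝ} (hη : 0 < η) (n : ℕ) :
    ∏ p ∈ n.primesBelow, (1 - (p : ℝ) ^ (-(1 + η)))⁻¹ ≤ 1 + 1 / η := by
  let f : ℕ →* ℝ :=
    { toFun := fun m => (m : ℝ) ^ (-(1 + η))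
      map_one' := by simp
      map_mul' := fun a b => by
        rw [Nat.cast_mul, Real.mul_rpow (Nat.cast_nonneg _) (Nat.cast_nonneg _)] }
  have hf : ∀ {p : ℕ}, p.Prime → ‖f p‖ < 1 := by
    intro p hp
    change ‖(p : ℝ) ^ (-(1 + η))‖ < 1
    rw [Real.norm_of_nonneg (by positivity)]
    exact Real.rpow_lt_one_of_one_lt_of_neg (by exact_mod_cast hp.one_lt) (by linarith)
  have h := (EulerProduct.summable_and_hasSum_smoothNumbers_prod_primesBelow_geometric hf n).2
  refine hasSum_le_of_sum_le h fun s => ?_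
  have e : ∑ i ∈ s, f (i : ℕ) = ∑ i ∈ s.map (Function.Embedding.subtype _), f i := by
    rw [Finset.sum_map]; rfl
  rw [e]
  set t := s.map (Function.Embedding.subtype _) with ht
  refine le_trans ?_ (sum_Icc_rpow_le hη (t.sup id))
  refine Finset.sum_le_sum_of_subset_of_nonneg ?_ ?_
  · intro i hi
    have h1 : i ≤ t.sup id := Finset.le_sup (f := id) hi
    rw [ht, Finset.mem_map] at hi
    obtain ⟨j, _, rfl⟩ := hi
    exact Finset.mem_Icc.mpr ⟨Nat.pos_of_ne_zero (Nat.ne_zero_of_mem_smoothNumbers j.2), h1⟩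
  · intro i _ _
    exact Real.rpow_nonneg (Nat.cast_nonneg _) _

lemma pow_dvd_factorial_mul {p : ℕ} (hp : 0 < p) (m : ℕ) : p ^ m ∣ (p * m).factorial := by
  induction m with
  | zero => simp
  | succ m ih =>
    have e : p * (m + 1) = (p * (m + 1) - 1) + 1 := by
      have : 0 < p * (m + 1) := by positivity
      omega
    rw [e, Nat.factorial_succ, ← e, pow_succ, mul_comm (p ^ m)]
    refine mul_dvd_mul (dvd_mul_right _ _) (ih.trans (Nat.factorial_dvd_factorial ?_))
    rw [mul_add]
    omega

/-- A weak form of Mertens' first theorem, from `∏_{p ≤ n} p ^ ⌊n / p⌋ ∣ n!`. -/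
lemma sum_log_div_prime_le (n : ℕ) :
    ∑ p ∈ (n + 1).primesBelow, Real.log p / p ≤ 2 * Real.log n := by
  rcases Nat.eq_zero_or_pos n with rfl | hn
  · have : (0 + 1).primesBelow = ∅ := by
      ext p
      rw [Nat.mem_primesBelow]
      simp only [Finset.notMem_empty, iff_false, not_and]
      intro h hp
      have := hp.two_le
      omega
    rw [this]; simp
  have hdvd : ∏ p ∈ (n + 1).primesBelow, p ^ (n / p) ∣ n.factorial := by
    refine Finset.prod_dvd_of_isRelPrime ?_ ?_
    · intro p hp q hq hpq
      exact Nat.coprime_iff_isRelPrime.mp (Nat.Coprime.pow _ _ ((Nat.coprime_primes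
        (Nat.prime_of_mem_primesBelow hp) (Nat.prime_of_mem_primesBelow hq)).mpr hpq))
    · intro p hp
      exact (pow_dvd_factorial_mul (Nat.prime_of_mem_primesBelow hp).pos _).trans
        (Nat.factorial_dvd_factorial (Nat.mul_div_le n p))
  have hle : ∏ p ∈ (n + 1).primesBelow, p ^ (n / p) ≤ n ^ n :=
    (Nat.le_of_dvd (Nat.factorial_pos n) hdvd).trans (Nat.factorial_le_pow n)
  have hlog : ∑ p ∈ (n + 1).primesBelow, ((n / p : ℕ) : ℝ) * Real.log p ≤ n * Real.log n := by
    have h0 : ∀ p ∈ (n + 1).primesBelow, (p : ℝ) ^ (n / p) ≠ 0 := fun p hp => by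
      have := (Nat.prime_of_mem_primesBelow hp).ne_zero
      positivity
    calc _ = Real.log (∏ p ∈ (n + 1).primesBelow, (p : ℝ) ^ (n / p)) := by
          rw [Real.log_prod h0]
          simp_rw [Real.log_pow]
      _ ≤ Real.log ((n : ℝ) ^ n) := by
          refine Real.log_le_log (Finset.prod_pos fun p hp => ?_) (by exact_mod_cast hle)
          have := (Nat.prime_of_mem_primesBelow hp).pos
          positivity
      _ = _ := Real.log_pow _ _
  have hn' : (0 : ℝ) < n := by exact_mod_cast hn
  have h2 : n * ∑ p ∈ (n + 1).primesBelow, Real.log p / p ≤ n * (2 * Real.log n) := by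
    calc _ = ∑ p ∈ (n + 1).primesBelow, n * (Real.log p / p) := Finset.mul_sum _ _ _
      _ ≤ ∑ p ∈ (n + 1).primesBelow, 2 * (((n / p : ℕ) : ℝ) * Real.log p) := by
          refine Finset.sum_le_sum fun p hp => ?_
          have hpp := Nat.prime_of_mem_primesBelow hp
          have hpn : p ≤ n := by have := Nat.lt_of_mem_primesBelow hp; omega
          have hp0 : (0 : ℝ) < p := by exact_mod_cast hpp.pos
          have hl : 0 ≤ Real.log p := Real.log_natCast_nonneg p
          have h1 : n ≤ 2 * (n / p) * p := by
            have := Nat.div_add_mod n p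
            have h3 := Nat.mod_lt n hpp.pos
            have h4 : 1 ≤ n / p := (Nat.one_le_div_iff hpp.pos).mpr hpn
            have h5 : p ≤ p * (n / p) := Nat.le_mul_of_pos_right _ h4
            nlinarith
          have h1' : (n : ℝ) / p ≤ 2 * ((n / p : ℕ) : ℝ) := by
            rw [div_le_iff₀ hp0]; exact_mod_cast h1
          calc (n : ℝ) * (Real.log p / p) = n / p * Real.log p := by ring
            _ ≤ 2 * ((n / p : ℕ) : ℝ) * Real.log p := by gcongr
            _ = _ := by ring
      _ = 2 * ∑ p ∈ (n + 1).primesBelow, ((n / p : ℕ) : ℝ) * Real.log p :=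
          (Finset.mul_sum _ _ _).symm
      _ ≤ n * (2 * Real.log n) := by linarith
  exact le_of_mul_le_mul_left h2 hn'

/-- A lower bound of Mertens type: compare the product with the Euler product of
`ζ(1 + 1 / log y)`, the ratio being controlled by `∑ log p / p`. -/
lemma mertens_lower {y : ℝ} (hy : 2 ≤ y) :
    Real.exp (-4) / 3 / Real.log y ≤ ∏ p ∈ (⌊y⌋₊ + 1).primesBelow, (1 - 1 / (p : ℝ)) := by
  set n := ⌊y⌋₊ with hn
  have hn2 : 2 ≤ n := Nat.le_floor (by exact_mod_cast hy)
  have hny : (n : ℝ) ≤ y := Nat.floor_le (by linarith)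
  have hlog2 : 0.69 < Real.log y := by
    have := Real.log_two_gt_d9
    have := Real.log_le_log (by norm_num) hy
    linarith
  have hL : 0 < Real.log y := by linarith
  set η := 1 / Real.log y with hηd
  have hη : 0 < η := by positivity
  have hB := prod_primesBelow_rpow_le hη (n + 1)
  have hη1 : 1 / η = Real.log y := by rw [hηd]; simp
  rw [hη1, Finset.prod_inv_distrib] at hB
  have hfac : ∀ p ∈ (n + 1).primesBelow, 0 < 1 - (p : ℝ) ^ (-(1 + η)) := fun p hp => by
    have hpp := Nat.prime_of_mem_primesBelow hp
    rw [sub_pos]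
    exact Real.rpow_lt_one_of_one_lt_of_neg (by exact_mod_cast hpp.one_lt) (by linarith)
  have hP : 0 < ∏ p ∈ (n + 1).primesBelow, (1 - (p : ℝ) ^ (-(1 + η))) := Finset.prod_pos hfac
  have hcmp : ∀ p ∈ (n + 1).primesBelow, 1 - (p : ℝ) ^ (-(1 + η))
      ≤ (1 - 1 / (p : ℝ)) * Real.exp (2 * η * (Real.log p / p)) := fun p hp => by
    have hpp := Nat.prime_of_mem_primesBelow hp
    have hp2 : (2 : ℝ) ≤ p := by exact_mod_cast hpp.two_le
    have hp0 : (0 : ℝ) < p := by linarith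
    have hl : 0 ≤ Real.log p := Real.log_natCast_nonneg p
    have e1 : (p : ℝ) ^ (-(1 + η)) = 1 / p * Real.exp (-(η * Real.log p)) := by
      rw [show -(1 + η) = -1 + -η by ring, Real.rpow_add hp0, Real.rpow_neg_one, one_div,
        Real.rpow_def_of_pos hp0]
      ring_nf
    have e2 := Real.add_one_le_exp (-(η * Real.log p))
    have e3 := Real.add_one_le_exp (2 * η * (Real.log p / p))
    have hinv : 1 / (p : ℝ) ≤ 1 / 2 := one_div_le_one_div_of_le (by norm_num) hp2
    have hinv0 : 0 < 1 / (p : ℝ) := by positivity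
    rw [e1]
    have s1 : 1 - 1 / (p : ℝ) * Real.exp (-(η * Real.log p))
        ≤ 1 - 1 / p + 1 / p * (η * Real.log p) := by nlinarith
    have s2 : (1 - 1 / (p : ℝ)) * (2 * η * (Real.log p / p) + 1)
        ≤ (1 - 1 / (p : ℝ)) * Real.exp (2 * η * (Real.log p / p)) := by
      gcongr; linarith
    refine s1.trans (le_trans ?_ s2)
    have e4 : Real.log p / p = 1 / p * Real.log p := by ring
    rw [e4]
    have : 0 ≤ 1 / (p : ℝ) * (η * Real.log p) := by positivity
    nlinarith
  have hprod := Finset.prod_le_prod (fun p hp => (hfac p hp).le) hcmp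
  rw [Finset.prod_mul_distrib, ← Real.exp_sum, ← Finset.mul_sum] at hprod
  have hs := sum_log_div_prime_le n
  have hexp : 2 * η * ∑ p ∈ (n + 1).primesBelow, Real.log p / p ≤ 4 := by
    have h1 : Real.log n ≤ Real.log y := Real.log_le_log (by positivity) hny
    calc _ ≤ 2 * η * (2 * Real.log y) := by gcongr; linarith
      _ = 4 := by rw [hηd]; field_simp; norm_num
  set W := ∏ p ∈ (n + 1).primesBelow, (1 - 1 / (p : ℝ)) with hW
  have hW0 : 0 ≤ W := Finset.prod_nonneg fun p hp => by
    have hp1 : (1 : ℝ) ≤ p := by exact_mod_cast (Nat.prime_of_mem_primesBelow hp).one_le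
    rw [sub_nonneg, div_le_one (by linarith)]; exact hp1
  have h1 : (1 + Real.log y)⁻¹ ≤ W * Real.exp 4 := by
    refine le_trans (inv_le_of_inv_le₀ hP hB) (hprod.trans ?_)
    gcongr
  have h2 : 1 / (3 * Real.log y) ≤ W * Real.exp 4 := by
    refine le_trans ?_ h1
    rw [one_div]
    gcongr
    linarith
  calc Real.exp (-4) / 3 / Real.log y = 1 / (3 * Real.log y) * Real.exp (-4) := by
        field_simp
    _ ≤ W * Real.exp 4 * Real.exp (-4) := by gcongr
    _ = W := by rw [mul_assoc, ← Real.exp_add]; simp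

/-! ### Removing the non-squarefree integers -/

/-- The case `a = l = 1` of `weight_sum_aux`: `weight` has mean `∏ (1 - 1 / p)` on the class of `s`
modulo `8`. -/
lemma weight_sum (η : ℕ → ℤ) (s N : ℕ) (hs : s < 8) {E : ℝ} (hE1 : 1 ≤ E) (T : Finset ℕ)
    (hη : ∀ p ∈ T, η p = 1 ∨ η p = -1) (hT : ∀ p ∈ T, p.Prime ∧ p ≠ 2)
    (hE : ∀ l : ℕ, 1 ≤ l → l ≤ ∏ p ∈ T, p → √l * (1 + Real.log l) ≤ E) :
    |∑ n ∈ (Finset.range (N + 1)).filter (fun n => n % 8 = s), weight η T n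
      - (N : ℝ) / 8 * ∏ p ∈ T, (1 - 1 / (p : ℝ))| ≤ 3 ^ T.card * E := by
  have := weight_sum_aux η s N hs (M := ((∏ p ∈ T, p : ℕ) : ℝ)) hE1
    (fun l h1 h2 => hE l h1 (by exact_mod_cast h2)) T hη hT 1 1 odd_one odd_one squarefree_one
    (Nat.coprime_one_right 1) (fun p _ => by simp) (by simp)
  simpa using this

/-- Each factor of `weight` is `2` or `0`, according to whether `(n / p) = e`. -/
lemma factor_cases {p n : ℕ} (hp : p.Prime) {e : ℤ} (he : e = 1 ∨ e = -1) :
    ((1 : ℝ) - (if p ∣ n then 1 else 0) + (e : ℝ) * ((jacobiSym (n : ℤ) p : ℤ) : ℝ) = 2 ∧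
      ¬ p ∣ n ∧ jacobiSym (n : ℤ) p = e) ∨
    (1 : ℝ) - (if p ∣ n then 1 else 0) + (e : ℝ) * ((jacobiSym (n : ℤ) p : ℤ) : ℝ) = 0 := by
  have : NeZero p := ⟨hp.ne_zero⟩
  by_cases h : p ∣ n
  · right
    have : jacobiSym (n : ℤ) p = 0 := by
      rw [jacobiSym.eq_zero_iff_not_coprime]
      have : ¬ Nat.Coprime n p := by
        rw [Nat.coprime_comm, hp.coprime_iff_not_dvd]; simpa using h
      simpa using this
    simp [h, this]
  · have hc : (n : ℤ).gcd (p : ℕ) = 1 := by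
      have : Nat.Coprime n p := by rw [Nat.coprime_comm, hp.coprime_iff_not_dvd]; exact h
      simpa using this
    rcases jacobiSym.eq_one_or_neg_one hc with hj | hj <;> rcases he with he | he <;>
      rw [hj, he] <;> norm_num [h]

section
variable {η : ℕ → ℤ} {T : Finset ℕ}

lemma weight_nonneg (hη : ∀ p ∈ T, η p = 1 ∨ η p = -1) (hT : ∀ p ∈ T, p.Prime ∧ p ≠ 2) (n : ℕ) :
    0 ≤ weight η T n :=
  Finset.prod_nonneg fun p hp => by
    rcases factor_cases (n := n) (hT p hp).1 (hη p hp) with h | h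
    · rw [h.1]; norm_num
    · rw [h]

lemma weight_le (hη : ∀ p ∈ T, η p = 1 ∨ η p = -1) (hT : ∀ p ∈ T, p.Prime ∧ p ≠ 2) (n : ℕ) :
    weight η T n ≤ 2 ^ T.card := by
  rw [← Finset.prod_const]
  refine Finset.prod_le_prod (fun p hp => ?_) (fun p hp => ?_) <;>
  · rcases factor_cases (n := n) (hT p hp).1 (hη p hp) with h | h
    · rw [h.1]; try norm_num
    · rw [h]; try norm_num

lemma weight_ne_zero (hη : ∀ p ∈ T, η p = 1 ∨ η p = -1) (hT : ∀ p ∈ T, p.Prime ∧ p ≠ 2) {n : ℕ}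
    (h : weight η T n ≠ 0) : ∀ p ∈ T, ¬ p ∣ n ∧ jacobiSym (n : ℤ) p = η p := by
  intro p hp
  rw [weight, Finset.prod_ne_zero_iff] at h
  exact ((factor_cases (n := n) (hT p hp).1 (hη p hp)).resolve_right (h p hp)).2

/-- Square factors do not affect the residue symbols, so they can only lower the weight. -/
lemma weight_sq_mul_le (hη : ∀ p ∈ T, η p = 1 ∨ η p = -1) (hT : ∀ p ∈ T, p.Prime ∧ p ≠ 2)
    (j m : ℕ) : weight η T (j ^ 2 * m) ≤ weight η T m := by
  by_cases h0 : weight η T (j ^ 2 * m) = 0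
  · rw [h0]; exact weight_nonneg hη hT m
  · apply le_of_eq
    refine Finset.prod_congr rfl fun p hp => ?_
    have hpp := (hT p hp).1
    have hnd := (weight_ne_zero hη hT h0 p hp).1
    have hj : ¬ p ∣ j := fun h => hnd (dvd_mul_of_dvd_left (dvd_pow h two_ne_zero) _)
    have hm : ¬ p ∣ m := fun h => hnd (dvd_mul_of_dvd_right h _)
    have hc : (j : ℤ).gcd (p : ℕ) = 1 := by
      have : Nat.Coprime j p := by rw [Nat.coprime_comm, hpp.coprime_iff_not_dvd]; exact hj
      simpa using this
    have e : jacobiSym ((j ^ 2 * m : ℕ) : ℤ) p = jacobiSym (m : ℤ) p := by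
      push_cast
      rw [jacobiSym.mul_left, jacobiSym.sq_one' hc, one_mul]
    rw [e, if_neg hnd, if_neg hm]

end

lemma sum_Ioc_telescope_le (a b : ℕ) :
    ∑ i ∈ Finset.Ioc a b, 1 / ((i : ℝ) * (i + 1)) ≤ 1 / (a + 1) := by
  rcases le_total a b with h | h
  · have : ∑ i ∈ Finset.Ioc a b, 1 / ((i : ℝ) * (i + 1)) = 1 / (a + 1) - 1 / (b + 1) := by
      induction b, h using Nat.le_induction with
      | base => simp
      | succ b hb ih =>
        rw [Finset.sum_Ioc_succ_top (by omega), ih]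
        push_cast
        field_simp
        ring
    rw [this]
    have : (0 : ℝ) < 1 / (b + 1) := by positivity
    linarith
  · rw [Finset.Ioc_eq_empty_of_le h]; simp; positivity

lemma sum_biUnion_le {f : ℕ → ℝ} (hf : ∀ n, 0 ≤ f n) (I : Finset ℕ) (B : ℕ → Finset ℕ) :
    ∑ n ∈ I.biUnion B, f n ≤ ∑ i ∈ I, ∑ n ∈ B i, f n := by
  induction I using Finset.induction_on with
  | empty => simp
  | insert a I ha ih =>
    rw [Finset.biUnion_insert, Finset.sum_insert ha]
    have h1 := Finset.sum_union_inter (s₁ := B a) (s₂ := I.biUnion B) (f := f)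
    have h2 : 0 ≤ ∑ n ∈ B a ∩ I.biUnion B, f n := Finset.sum_nonneg fun n _ => hf n
    linarith

/-- Since odd squares are `≡ 1 (mod 8)`, the substitution `n = (2 i + 1) ^ 2 m` keeps the residue
class modulo `8`. -/
lemma sum_odd_sq_dvd_le {η : ℕ → ℤ} {T : Finset ℕ} (hη : ∀ p ∈ T, η p = 1 ∨ η p = -1)
    (hT : ∀ p ∈ T, p.Prime ∧ p ≠ 2) (s N i : ℕ) :
    ∑ n ∈ ((Finset.range (N + 1)).filter (fun n => n % 8 = s)).filter
        (fun n => (2 * i + 1) ^ 2 ∣ n), weight η T n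
      ≤ ∑ m ∈ (Finset.range (N / (2 * i + 1) ^ 2 + 1)).filter (fun n => n % 8 = s),
          weight η T m := by
  set j := 2 * i + 1 with hj
  have hj0 : 0 < j ^ 2 := by positivity
  have hj8 : j ^ 2 % 8 = 1 := by
    have h : j % 8 = 1 ∨ j % 8 = 3 ∨ j % 8 = 5 ∨ j % 8 = 7 := by omega
    rcases h with h | h | h | h <;> simp [Nat.pow_mod, h]
  calc _ ≤ ∑ n ∈ ((Finset.range (N + 1)).filter (fun n => n % 8 = s)).filter
        (fun n => j ^ 2 ∣ n), weight η T (n / j ^ 2) := by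
        refine Finset.sum_le_sum fun n hn => ?_
        have hd := (Finset.mem_filter.mp hn).2
        have := weight_sq_mul_le hη hT j (n / j ^ 2)
        rwa [Nat.mul_div_cancel' hd] at this
    _ = _ := by
        refine Finset.sum_bij (fun n _ => n / j ^ 2) ?_ ?_ ?_ ?_
        · intro n hn
          rw [Finset.mem_filter, Finset.mem_filter, Finset.mem_range] at hn
          obtain ⟨⟨h1, h2⟩, m, rfl⟩ := hn
          rw [Nat.mul_div_cancel_left _ hj0, Finset.mem_filter, Finset.mem_range]
          refine ⟨?_, ?_⟩
          · rw [Nat.lt_add_one_iff, Nat.le_div_iff_mul_le hj0, mul_comm]; omega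
          · rw [← h2, Nat.mul_mod, hj8, one_mul, Nat.mod_mod]
        · intro a ha b hb hab
          have h1 := (Finset.mem_filter.mp ha).2
          have h2 := (Finset.mem_filter.mp hb).2
          rw [← Nat.mul_div_cancel' h1, hab, Nat.mul_div_cancel' h2]
        · intro m hm
          rw [Finset.mem_filter, Finset.mem_range, Nat.lt_add_one_iff,
            Nat.le_div_iff_mul_le hj0] at hm
          refine ⟨j ^ 2 * m, ?_, Nat.mul_div_cancel_left _ hj0⟩
          rw [Finset.mem_filter, Finset.mem_filter, Finset.mem_range]
          refine ⟨⟨by rw [mul_comm]; omega, ?_⟩, dvd_mul_right _ _⟩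
          rw [Nat.mul_mod, hj8, one_mul, Nat.mod_mod, hm.2]
        · intro n _; rfl

/-- Removing the multiples of odd squares `j ^ 2`, `j ≥ 3`: for `j ≤ 2 J + 1` the equidistribution
estimate is used, and for larger `j` the trivial bound. As `(2 i + 1) ^ 2 > 4 i (i + 1)`, the removed
part of the main term is at most `1 / 4` of it, which leaves `3 / 4 * 1 / 8 = 3 / 32`. -/
lemma sieve_bound {η : ℕ → ℤ} {T : Finset ℕ} (hη : ∀ p ∈ T, η p = 1 ∨ η p = -1)
    (hT : ∀ p ∈ T, p.Prime ∧ p ≠ 2) {s : ℕ} (hs : s < 8) (hsodd : Odd s) (N J : ℕ)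
    {E : ℝ} (hE1 : 1 ≤ E)
    (hE : ∀ l : ℕ, 1 ≤ l → l ≤ ∏ p ∈ T, p → √l * (1 + Real.log l) ≤ E) :
    3 / 32 * (N * ∏ p ∈ T, (1 - 1 / (p : ℝ))) - (J + 1) * (3 ^ T.card * E)
        - 2 ^ T.card * (N / (J + 1))
      ≤ 2 ^ T.card * (((Finset.range (N + 1)).filter (fun n => n % 8 = s ∧ Squarefree n ∧
          ∀ p ∈ T, ¬ p ∣ n ∧ jacobiSym (n : ℤ) p = η p)).card : ℝ) := by
  set W := ∏ p ∈ T, (1 - 1 / (p : ℝ)) with hW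
  have hW0 : 0 ≤ W := Finset.prod_nonneg fun p hp => by
    have hp1 : (1 : ℝ) ≤ p := by exact_mod_cast (hT p hp).1.one_le
    rw [sub_nonneg, div_le_one (by linarith)]; exact hp1
  set A : ℕ → Finset ℕ := fun N => (Finset.range (N + 1)).filter (fun n => n % 8 = s) with hA
  set S : ℕ → ℝ := fun N => ∑ n ∈ A N, weight η T n with hS
  set D := (3 : ℝ) ^ T.card * E with hD
  have hD0 : 0 ≤ D := by positivity
  have hest : ∀ N, |S N - N / 8 * W| ≤ D := fun N => weight_sum η s N hs hE1 T hη hT hE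
  have hpos : ∀ {N n}, n ∈ A N → 0 < n ∧ n ≤ N ∧ n % 8 = s := by
    intro N n hn
    rw [hA, Finset.mem_filter, Finset.mem_range] at hn
    obtain ⟨c, hc⟩ := hsodd
    omega
  have htriv : ∀ N, S N ≤ 2 ^ T.card * N := by
    intro N
    have hsub : A N ⊆ Finset.Icc 1 N := fun n hn => Finset.mem_Icc.mpr ⟨(hpos hn).1, (hpos hn).2.1⟩
    have hc : (A N).card ≤ N := by simpa using Finset.card_le_card hsub
    calc S N ≤ ∑ n ∈ A N, (2 : ℝ) ^ T.card := Finset.sum_le_sum fun n _ => weight_le hη hT n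
      _ = 2 ^ T.card * (A N).card := by rw [Finset.sum_const, nsmul_eq_mul, mul_comm]
      _ ≤ 2 ^ T.card * N := by gcongr
  have hnsq : ∑ n ∈ (A N).filter (fun n => ¬ Squarefree n), weight η T n
      ≤ ∑ i ∈ Finset.Ioc 0 N, S (N / (2 * i + 1) ^ 2) := by
    calc _ ≤ ∑ n ∈ (Finset.Ioc 0 N).biUnion
            (fun i => (A N).filter (fun n => (2 * i + 1) ^ 2 ∣ n)), weight η T n := by
          refine Finset.sum_le_sum_of_subset_of_nonneg ?_ (fun n _ _ => weight_nonneg hη hT n)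
          intro n hn
          rw [Finset.mem_filter] at hn
          obtain ⟨hn0, hnN, hns⟩ := hpos hn.1
          have hnodd : Odd n := by
            obtain ⟨c, hc⟩ := hsodd
            exact Nat.odd_iff.mpr (by omega)
          have : ∃ x, x * x ∣ n ∧ x ≠ 1 := by
            by_contra hcon
            push Not at hcon
            exact hn.2 fun x hx => Nat.isUnit_iff.mpr (hcon x hx)
          obtain ⟨x, hx, hx1⟩ := this
          have hxodd : Odd x := hnodd.of_dvd_nat (dvd_of_mul_right_dvd hx)
          obtain ⟨i, hi⟩ := hxodd
          rw [Finset.mem_biUnion]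
          refine ⟨i, ?_, ?_⟩
          · have := Nat.le_of_dvd hn0 (dvd_of_mul_right_dvd hx)
            rw [Finset.mem_Ioc]; omega
          · rw [Finset.mem_filter, ← hi, sq]; exact ⟨hn.1, hx⟩
      _ ≤ ∑ i ∈ Finset.Ioc 0 N, ∑ n ∈ (A N).filter (fun n => (2 * i + 1) ^ 2 ∣ n),
            weight η T n := sum_biUnion_le (weight_nonneg hη hT) _ _
      _ ≤ _ := Finset.sum_le_sum fun i _ => sum_odd_sq_dvd_le hη hT s N i
  have hdiv : ∀ i : ℕ, 0 < i → ((N / (2 * i + 1) ^ 2 : ℕ) : ℝ)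
      ≤ N * (1 / 4 * (1 / ((i : ℝ) * (i + 1)))) := by
    intro i hi
    have hi' : (0 : ℝ) < i := by exact_mod_cast hi
    refine Nat.cast_div_le.trans ?_
    push_cast
    rw [div_eq_mul_one_div]
    gcongr
    rw [show (1 : ℝ) / 4 * (1 / ((i : ℝ) * (i + 1))) = 1 / (4 * (i * (i + 1))) by
      field_simp]
    apply one_div_le_one_div_of_le (by positivity)
    nlinarith
  have hsmall : ∑ i ∈ Finset.Ioc 0 J, S (N / (2 * i + 1) ^ 2) ≤ N * W / 32 + J * D := by
    calc _ ≤ ∑ i ∈ Finset.Ioc 0 J, (N * W / 32 * (1 / ((i : ℝ) * (i + 1))) + D) := by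
          refine Finset.sum_le_sum fun i hi => ?_
          have h1 := (abs_le.mp (hest (N / (2 * i + 1) ^ 2))).2
          have h2 := hdiv i (Finset.mem_Ioc.mp hi).1
          have h3 : ((N / (2 * i + 1) ^ 2 : ℕ) : ℝ) / 8 * W
              ≤ N * (1 / 4 * (1 / ((i : ℝ) * (i + 1)))) / 8 * W := by gcongr
          have h4 : N * (1 / 4 * (1 / ((i : ℝ) * (i + 1)))) / 8 * W
              = N * W / 32 * (1 / ((i : ℝ) * (i + 1))) := by ring
          linarith
      _ = N * W / 32 * ∑ i ∈ Finset.Ioc 0 J, (1 / ((i : ℝ) * (i + 1))) + J * D := by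
          rw [Finset.sum_add_distrib, ← Finset.mul_sum]; simp
      _ ≤ N * W / 32 * 1 + J * D := by
          have := sum_Ioc_telescope_le 0 J
          norm_num at this
          gcongr
          simpa using this
      _ = _ := by ring
  have hlarge : ∑ i ∈ Finset.Ioc J N, S (N / (2 * i + 1) ^ 2) ≤ 2 ^ T.card * (N / (J + 1)) := by
    calc _ ≤ ∑ i ∈ Finset.Ioc J N, 2 ^ T.card * N * (1 / ((i : ℝ) * (i + 1))) := by
          refine Finset.sum_le_sum fun i hi => ?_
          have hi0 : 0 < i := by have := (Finset.mem_Ioc.mp hi).1; omega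
          have h1 := htriv (N / (2 * i + 1) ^ 2)
          have h2 := hdiv i hi0
          refine h1.trans ?_
          rw [mul_assoc]
          gcongr
          refine h2.trans ?_
          have : (0 : ℝ) ≤ 1 / ((i : ℝ) * (i + 1)) := by positivity
          gcongr
          linarith
      _ = 2 ^ T.card * N * ∑ i ∈ Finset.Ioc J N, (1 / ((i : ℝ) * (i + 1))) := by
          rw [← Finset.mul_sum]
      _ ≤ 2 ^ T.card * N * (1 / (J + 1)) := by
          gcongr; exact sum_Ioc_telescope_le J N
      _ = _ := by ring
  have hSnn : ∀ N, 0 ≤ S N := fun N => Finset.sum_nonneg fun n _ => weight_nonneg hη hT n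
  have hsplit : ∑ i ∈ Finset.Ioc 0 N, S (N / (2 * i + 1) ^ 2)
      ≤ ∑ i ∈ Finset.Ioc 0 J, S (N / (2 * i + 1) ^ 2)
        + ∑ i ∈ Finset.Ioc J N, S (N / (2 * i + 1) ^ 2) := by
    rw [← Finset.sum_union (by
      rw [Finset.disjoint_left]
      intro i h1 h2
      rw [Finset.mem_Ioc] at h1 h2
      omega)]
    refine Finset.sum_le_sum_of_subset_of_nonneg ?_ (fun i _ _ => hSnn _)
    intro i hi
    rw [Finset.mem_union, Finset.mem_Ioc, Finset.mem_Ioc]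
    rw [Finset.mem_Ioc] at hi
    omega
  have hgood : ∑ n ∈ (A N).filter (fun n => Squarefree n), weight η T n
      ≤ 2 ^ T.card * (((Finset.range (N + 1)).filter (fun n => n % 8 = s ∧ Squarefree n ∧
          ∀ p ∈ T, ¬ p ∣ n ∧ jacobiSym (n : ℤ) p = η p)).card : ℝ) := by
    calc _ = ∑ n ∈ (A N).filter (fun n => Squarefree n),
            (if ∀ p ∈ T, ¬ p ∣ n ∧ jacobiSym (n : ℤ) p = η p then weight η T n else 0) := by
          refine Finset.sum_congr rfl fun n _ => ?_
          split_ifs with h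
          · rfl
          · by_contra h0
            exact h (weight_ne_zero hη hT h0)
      _ ≤ ∑ n ∈ (A N).filter (fun n => Squarefree n),
            (if ∀ p ∈ T, ¬ p ∣ n ∧ jacobiSym (n : ℤ) p = η p then (2 : ℝ) ^ T.card else 0) := by
          refine Finset.sum_le_sum fun n _ => ?_
          split_ifs
          · exact weight_le hη hT n
          · exact le_rfl
      _ = _ := by
          rw [← Finset.sum_filter, Finset.sum_const, nsmul_eq_mul, mul_comm,
            Finset.filter_filter, hA, Finset.filter_filter]
  have htot := Finset.sum_filter_add_sum_filter_not (A N) (fun n => Squarefree n) (weight η T)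
  have h1 := (abs_le.mp (hest N)).1
  have h2 : S N = ∑ n ∈ A N, weight η T n := rfl
  linarith

/-! ### Uniformity in `y ≤ log Q`, and passage from `n` to `d` -/

lemma chiD_prime (d : ℤ) {p : ℕ} (hp : p.Prime) :
    chiD d p = if p = 2 then (if d % 8 = 1 then 1 else -1) else jacobiSym d p := by
  simp [chiD, Nat.primeFactorsList_prime hp]

/-- The odd primes up to `y`. -/
noncomputable def oddPrimes (y : ℝ) : Finset ℕ := (⌊y⌋₊ + 1).primesBelow.erase 2

lemma mem_oddPrimes {y : ℝ} (hy : 0 ≤ y) {p : ℕ} :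
    p ∈ oddPrimes y ↔ p.Prime ∧ p ≠ 2 ∧ (p : ℝ) ≤ y := by
  rw [oddPrimes, Finset.mem_erase, Nat.mem_primesBelow, Nat.lt_add_one_iff, Nat.le_floor_iff hy]
  tauto

lemma card_oddPrimes_le (y : ℝ) : (oddPrimes y).card ≤ Nat.primeCounting ⌊y⌋₊ := by
  refine (Finset.card_le_card (Finset.erase_subset _ _)).trans (le_of_eq ?_)
  rw [Nat.primesBelow_card_eq_primeCounting', Nat.primeCounting]

/-- The moduli `l` that occur in expanding `weight η (oddPrimes y)` are at most `4 ^ y`. -/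
lemma prod_oddPrimes_le (y : ℝ) : ∏ p ∈ oddPrimes y, p ≤ 4 ^ ⌊y⌋₊ := by
  refine le_trans ?_ (primorial_le_four_pow ⌊y⌋₊)
  rw [primorial]
  refine Finset.prod_le_prod_of_subset_of_one_le' ?_ ?_
  · intro p hp
    rw [oddPrimes, Finset.mem_erase, Nat.mem_primesBelow] at hp
    rw [Finset.mem_filter, Finset.mem_range]
    exact hp.2
  · intro p hp _
    rw [Finset.mem_filter, Finset.mem_range] at hp
    exact hp.2.one_le

lemma mertens_oddPrimes {y : ℝ} (hy : 2 ≤ y) :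
    Real.exp (-4) / 3 / Real.log y ≤ ∏ p ∈ oddPrimes y, (1 - 1 / (p : ℝ)) := by
  refine (mertens_lower hy).trans ?_
  have h2 : 2 ∈ (⌊y⌋₊ + 1).primesBelow := by
    rw [Nat.mem_primesBelow, Nat.lt_add_one_iff]
    exact ⟨Nat.le_floor (by exact_mod_cast hy), Nat.prime_two⟩
  rw [← Finset.mul_prod_erase _ _ h2]
  refine mul_le_of_le_one_left (Finset.prod_nonneg fun p hp => ?_) (by norm_num)
  have hp1 : (1 : ℝ) ≤ p := by
    exact_mod_cast (Nat.prime_of_mem_primesBelow (Finset.mem_of_mem_erase hp)).one_le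
  rw [sub_nonneg, div_le_one (by linarith)]; exact hp1

/-- The growth conditions on `Q` under which the error terms are negligible. -/
lemma eventually_large (c : ℝ) (hc : 0 < c) : ∀ᶠ Q : ℝ in Filter.atTop,
    3 ≤ Q ∧ (Nat.primeCounting ⌊Real.log Q⌋₊ : ℝ) ≤ 0.01 * Real.log Q ∧
      1 + 2 * Real.log Q ≤ Q ^ (0.01 : ℝ) ∧ 96 * Real.log Q ≤ c * Q ^ (0.08 : ℝ) := by
  have hlog : ∀ (C r : ℝ), 0 < C → 0 < r →
      ∀ᶠ Q : ℝ in Filter.atTop, Real.log Q ≤ C * Q ^ r := by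
    intro C r hC hr
    filter_upwards [(isLittleO_log_rpow_atTop hr).bound hC, Filter.eventually_ge_atTop 1]
      with Q h1 h2
    have h3 : (0 : ℝ) ≤ Q ^ r := by positivity
    rw [Real.norm_of_nonneg h3] at h1
    exact (le_abs_self _).trans h1
  have hpi : ∀ᶠ x : ℝ in Filter.atTop, (Nat.primeCounting ⌊x⌋₊ : ℝ) ≤ 0.01 * x := by
    filter_upwards [Chebyshev.eventually_primeCounting_le (ε := 1) one_pos,
      Filter.tendsto_atTop.mp Real.tendsto_log_atTop 300, Filter.eventually_ge_atTop 1]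
      with x h1 h2 h3
    refine h1.trans ?_
    rw [div_le_iff₀ (by linarith)]
    have h4 : Real.log 4 ≤ 2 := by
      rw [show (4 : ℝ) = 2 ^ 2 by norm_num, Real.log_pow]
      have := Real.log_two_lt_d9
      norm_num; linarith
    nlinarith
  have htend : Filter.Tendsto (fun Q : ℝ => Q ^ (0.01 : ℝ)) Filter.atTop Filter.atTop :=
    tendsto_rpow_atTop (by norm_num)
  filter_upwards [Filter.eventually_ge_atTop 3, Real.tendsto_log_atTop.eventually hpi,
    hlog (1 / 4) 0.01 (by norm_num) (by norm_num),
    htend.eventually_ge_atTop 2,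
    hlog (c / 96) 0.08 (by positivity) (by norm_num)] with Q h1 h2 h3 h4 h5
  refine ⟨h1, h2, ?_, ?_⟩
  · linarith
  · linarith

/-- For `y ≤ log Q` the number of terms is `3 ^ π(y) = Q ^ o(1)`, and every modulus `l` satisfies
`√l ≤ 2 ^ y ≤ Q ^ log 2`, where `log 2 < 0.7`; that `log 2 < 1` is what makes the argument work. -/
lemma error_le {Q y : ℝ} (hQ : 3 ≤ Q) (hy : 2 ≤ y) (hyQ : y ≤ Real.log Q)
    (hpi : (Nat.primeCounting ⌊Real.log Q⌋₊ : ℝ) ≤ 0.01 * Real.log Q) :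
    (3 : ℝ) ^ (oddPrimes y).card ≤ Q ^ (0.02 : ℝ) ∧
    ∀ l : ℕ, 1 ≤ l → l ≤ ∏ p ∈ oddPrimes y, p →
      √l * (1 + Real.log l) ≤ Q ^ (0.7 : ℝ) * (1 + 2 * Real.log Q) := by
  have hQ0 : 0 < Q := by linarith
  set L := Real.log Q with hL
  have hl4 : Real.log 4 = 2 * Real.log 2 := by
    rw [show (4 : ℝ) = 2 ^ 2 by norm_num, Real.log_pow]; norm_num
  have hl2 := Real.log_two_lt_d9
  have hl2' := Real.log_two_gt_d9
  constructor
  · have h1 : ((oddPrimes y).card : ℝ) ≤ 0.01 * L := by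
      refine le_trans ?_ hpi
      exact_mod_cast (card_oddPrimes_le y).trans (Nat.monotone_primeCounting (Nat.floor_mono hyQ))
    have h3 : Real.log 3 ≤ 2 := by
      have := Real.log_le_sub_one_of_pos (x := 3) (by norm_num)
      linarith
    rw [← Real.rpow_natCast, Real.rpow_def_of_pos (by norm_num), Real.rpow_def_of_pos hQ0]
    apply Real.exp_le_exp.mpr
    have : (0 : ℝ) ≤ (oddPrimes y).card := Nat.cast_nonneg _
    nlinarith
  · intro l hl1 hl
    have hl0 : (0 : ℝ) < l := by exact_mod_cast hl1
    have h1 : Real.log l ≤ Real.log 4 * L := by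
      have h2 : (l : ℝ) ≤ 4 ^ ⌊y⌋₊ := by exact_mod_cast hl.trans (prod_oddPrimes_le y)
      have h3 := Real.log_le_log hl0 h2
      rw [Real.log_pow] at h3
      have h4 : (⌊y⌋₊ : ℝ) ≤ L := (Nat.floor_le (by linarith)).trans hyQ
      refine h3.trans ?_
      rw [mul_comm]
      gcongr
    have h5 : √(l : ℝ) ≤ Q ^ (0.7 : ℝ) := by
      rw [Real.sqrt_eq_rpow, Real.rpow_def_of_pos hl0, Real.rpow_def_of_pos hQ0]
      apply Real.exp_le_exp.mpr
      nlinarith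
    have h6 : 0 ≤ Real.log l := Real.log_natCast_nonneg l
    gcongr
    nlinarith

/-- The sieve bound with cut-off `J = ⌊Q ^ 0.1⌋`: both error terms are `O(Q ^ 0.92)`, against a main
term of order at least `Q / log Q`. -/
lemma count_lower {Q y : ℝ} (hQ : 3 ≤ Q) (hy : 2 ≤ y) (hyQ : y ≤ Real.log Q)
    (hpi : (Nat.primeCounting ⌊Real.log Q⌋₊ : ℝ) ≤ 0.01 * Real.log Q)
    (h01 : 1 + 2 * Real.log Q ≤ Q ^ (0.01 : ℝ))
    (h08 : 96 * Real.log Q ≤ Real.exp (-4) / 3 * Q ^ (0.08 : ℝ))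
    {η : ℕ → ℤ} (hη : ∀ p ∈ oddPrimes y, η p = 1 ∨ η p = -1) {s : ℕ} (hs : s < 8)
    (hsodd : Odd s) :
    Real.exp (-4) / 3 / 64 * Q / (2 ^ Nat.primeCounting ⌊y⌋₊ * Real.log y)
      ≤ (((Finset.range (⌊Q⌋₊ + 1)).filter (fun n => n % 8 = s ∧ Squarefree n ∧
          ∀ p ∈ oddPrimes y, ¬ p ∣ n ∧ jacobiSym (n : ℤ) p = η p)).card : ℝ) := by
  have hQ0 : 0 < Q := by linarith
  have hT : ∀ p ∈ oddPrimes y, p.Prime ∧ p ≠ 2 := fun p hp => by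
    have := (mem_oddPrimes (by linarith : 0 ≤ y)).mp hp
    exact ⟨this.1, this.2.1⟩
  obtain ⟨h3k, hE⟩ := error_le hQ hy hyQ hpi
  have hLy : 0 < Real.log y := Real.log_pos (by linarith)
  have hL2 : 2 ≤ Real.log Q := hy.trans hyQ
  have hE1 : 1 ≤ Q ^ (0.7 : ℝ) * (1 + 2 * Real.log Q) := by
    have : 1 ≤ Q ^ (0.7 : ℝ) := Real.one_le_rpow (by linarith) (by norm_num)
    nlinarith
  have key := sieve_bound hη hT hs hsodd ⌊Q⌋₊ ⌊Q ^ (0.1 : ℝ)⌋₊ hE1 hE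
  set k := (oddPrimes y).card with hk
  set J := ⌊Q ^ (0.1 : ℝ)⌋₊ with hJ
  set N := ⌊Q⌋₊ with hN
  set W := ∏ p ∈ oddPrimes y, (1 - 1 / (p : ℝ)) with hW
  set c := Real.exp (-4) / 3 with hc
  have hc0 : 0 < c := by positivity
  set F : ℝ := (((Finset.range (N + 1)).filter (fun n => n % 8 = s ∧ Squarefree n ∧
          ∀ p ∈ oddPrimes y, ¬ p ∣ n ∧ jacobiSym (n : ℤ) p = η p)).card : ℝ) with hF
  have hWc : c / Real.log y ≤ W := mertens_oddPrimes hy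
  have hNQ : (N : ℝ) ≤ Q := Nat.floor_le hQ0.le
  have hNQ' : Q / 2 ≤ N := by
    have := Nat.lt_floor_add_one Q
    linarith
  have hQp : 1 ≤ Q ^ (0.1 : ℝ) := Real.one_le_rpow (by linarith) (by norm_num)
  have hJ1 : (J : ℝ) + 1 ≤ 2 * Q ^ (0.1 : ℝ) := by
    have : (J : ℝ) ≤ Q ^ (0.1 : ℝ) := Nat.floor_le (by linarith)
    linarith
  have hJ2 : Q ^ (0.1 : ℝ) ≤ J + 1 := (Nat.lt_floor_add_one _).le
  have h2k : (2 : ℝ) ^ k ≤ Q ^ (0.02 : ℝ) :=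
    (pow_le_pow_left₀ (by norm_num) (by norm_num) k).trans h3k
  have hmul : ∀ a b : ℝ, Q ^ a * Q ^ b = Q ^ (a + b) := fun a b => (Real.rpow_add hQ0 a b).symm
  have herr1 : ((J : ℝ) + 1) * (3 ^ k * (Q ^ (0.7 : ℝ) * (1 + 2 * Real.log Q)))
      ≤ 2 * Q ^ (0.92 : ℝ) := by
    calc _ ≤ 2 * Q ^ (0.1 : ℝ) * (Q ^ (0.02 : ℝ) * (Q ^ (0.7 : ℝ) * Q ^ (0.01 : ℝ))) := by
          gcongr
      _ = 2 * Q ^ (0.83 : ℝ) := by rw [mul_assoc, hmul, hmul, hmul]; norm_num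
      _ ≤ 2 * Q ^ (0.92 : ℝ) := by
          gcongr
          · linarith
          · norm_num
  have herr2 : (2 : ℝ) ^ k * (N / (J + 1)) ≤ Q ^ (0.92 : ℝ) := by
    calc _ ≤ Q ^ (0.02 : ℝ) * (Q / Q ^ (0.1 : ℝ)) := by gcongr
      _ = Q ^ (0.92 : ℝ) := by
          nth_rewrite 2 [← Real.rpow_one Q]
          rw [← Real.rpow_sub hQ0, hmul]; norm_num
  have hQL : 3 * Q ^ (0.92 : ℝ) ≤ c * Q / (32 * Real.log y) := by
    rw [le_div_iff₀ (by positivity)]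
    have h1 : Real.log y ≤ Real.log Q := by
      refine le_trans ?_ hyQ
      have := Real.log_le_sub_one_of_pos (x := y) (by linarith)
      linarith
    have h2 : Q ^ (0.92 : ℝ) * Q ^ (0.08 : ℝ) = Q := by rw [hmul]; norm_num
    calc 3 * Q ^ (0.92 : ℝ) * (32 * Real.log y) ≤ Q ^ (0.92 : ℝ) * (96 * Real.log Q) := by
          have : 0 ≤ Q ^ (0.92 : ℝ) := by positivity
          nlinarith
      _ ≤ Q ^ (0.92 : ℝ) * (c * Q ^ (0.08 : ℝ)) := by gcongr
      _ = c * Q := by rw [mul_left_comm, h2]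
  have hNW : c * Q / (2 * Real.log y) ≤ N * W := by
    calc c * Q / (2 * Real.log y) = Q / 2 * (c / Real.log y) := by field_simp
      _ ≤ N * W := by gcongr
  have hmain : c / 64 * Q / Real.log y ≤ 2 ^ k * F := by
    have e1 : c * Q / (32 * Real.log y) = 1 / 16 * (c * Q / (2 * Real.log y)) := by
      field_simp; norm_num
    have e2 : c / 64 * Q / Real.log y = 1 / 32 * (c * Q / (2 * Real.log y)) := by
      field_simp; norm_num
    rw [e1] at hQL
    rw [e2]
    linarith
  have hkπ : (2 : ℝ) ^ k ≤ 2 ^ Nat.primeCounting ⌊y⌋₊ :=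
    pow_le_pow_right₀ (by norm_num) (card_oddPrimes_le y)
  have hF0 : 0 ≤ F := Nat.cast_nonneg _
  rw [mul_comm ((2 : ℝ) ^ _), ← div_div, div_le_iff₀ (by positivity)]
  refine hmain.trans ?_
  rw [mul_comm]
  gcongr

/-- Multiplication by `δ` turns a count of positive `n` in a fixed class modulo `8` with prescribed
symbols `(n / p)` into a count of the admissible `d = δ n`. -/
lemma card_le_card {δ : ℤ} (hδ : δ = 1 ∨ δ = -1) {ε : ℕ → ℤ}
    (hε : ∀ p : ℕ, p.Prime → ε p = 1 ∨ ε p = -1) {Q y : ℝ} (hQ : 0 ≤ Q) (hy : 2 ≤ y) :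
    ∃ (η : ℕ → ℤ) (s : ℕ), (∀ p ∈ oddPrimes y, η p = 1 ∨ η p = -1) ∧ s < 8 ∧ Odd s ∧
      ((Finset.range (⌊Q⌋₊ + 1)).filter (fun n => n % 8 = s ∧ Squarefree n ∧
          ∀ p ∈ oddPrimes y, ¬ p ∣ n ∧ jacobiSym (n : ℤ) p = η p)).card ≤
      Nat.card {d : ℤ // Squarefree d ∧ d % 4 = 1 ∧ 0 < δ * d ∧ ((δ * d : ℤ) : ℝ) ≤ Q ∧
          (∀ p : ℕ, p.Prime → (p : ℝ) ≤ y → ¬((p : ℤ) ∣ d)) ∧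
          (∀ p : ℕ, p.Prime → (p : ℝ) ≤ y → chiD d p = ε p)} := by
  have hy0 : 0 ≤ y := by linarith
  have hδδ : δ * δ = 1 := by rcases hδ with rfl | rfl <;> norm_num
  have hδj : ∀ p : ℕ, jacobiSym δ p = 1 ∨ jacobiSym δ p = -1 := fun p => by
    rcases hδ with rfl | rfl
    · left; exact jacobiSym.one_left p
    · exact jacobiSym.eq_one_or_neg_one (by simp)
  -- The value of `χ_d(2)` prescribes `d` modulo `8`, hence the class `s` of `n = δ d`.
  obtain ⟨s, hs8, hsodd, hsd⟩ : ∃ s : ℕ, s < 8 ∧ Odd s ∧ ∀ n : ℕ, n % 8 = s →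
      (δ * n) % 8 = if ε 2 = 1 then 1 else 5 := by
    rcases hδ with rfl | rfl <;> by_cases h : ε 2 = 1
    · exact ⟨1, by norm_num, by decide, fun n hn => by rw [if_pos h]; omega⟩
    · exact ⟨5, by norm_num, by decide, fun n hn => by rw [if_neg h]; omega⟩
    · exact ⟨7, by norm_num, by decide, fun n hn => by rw [if_pos h]; omega⟩
    · exact ⟨3, by norm_num, by decide, fun n hn => by rw [if_neg h]; omega⟩
  refine ⟨fun p => ε p * jacobiSym δ p, s, ?_, hs8, hsodd, ?_⟩
  · intro p hp
    rcases hε p ((mem_oddPrimes hy0).mp hp).1 with h1 | h1 <;>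
      rcases hδj p with h2 | h2 <;> simp [h1, h2]
  · set D : Set ℤ := {d : ℤ | Squarefree d ∧ d % 4 = 1 ∧ 0 < δ * d ∧ ((δ * d : ℤ) : ℝ) ≤ Q ∧
          (∀ p : ℕ, p.Prime → (p : ℝ) ≤ y → ¬((p : ℤ) ∣ d)) ∧
          (∀ p : ℕ, p.Prime → (p : ℝ) ≤ y → chiD d p = ε p)} with hD
    -- `Nat.card` of an infinite type would be `0`
    have hfin : D.Finite := by
      refine (Set.finite_Icc (-(⌊Q⌋₊ : ℤ)) ⌊Q⌋₊).subset ?_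
      rintro d ⟨_, _, h1, h2, _⟩
      have h3 : δ * d ≤ (⌊Q⌋₊ : ℤ) := by
        have : (δ * d).toNat ≤ ⌊Q⌋₊ := Nat.le_floor (by
          have e : (((δ * d).toNat : ℤ) : ℝ) = ((δ * d : ℤ) : ℝ) := by
            rw [Int.toNat_of_nonneg h1.le]
          rw [← Int.cast_natCast, e]; exact h2)
        omega
      rw [Set.mem_Icc]
      rcases hδ with rfl | rfl <;> constructor <;> omega
    change _ ≤ Nat.card D
    rw [Nat.card_coe_set_eq]
    set F := (Finset.range (⌊Q⌋₊ + 1)).filter (fun n => n % 8 = s ∧ Squarefree n ∧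
          ∀ p ∈ oddPrimes y, ¬ p ∣ n ∧ jacobiSym (n : ℤ) p = ε p * jacobiSym δ p) with hF
    have hδ0 : δ ≠ 0 := by rintro rfl; norm_num at hδδ
    have hinj : Function.Injective (fun n : ℕ => δ * (n : ℤ)) := fun a b h => by
      have := mul_left_cancel₀ hδ0 h
      exact_mod_cast this
    rw [← Finset.card_image_of_injective F hinj, ← Set.ncard_coe_finset]
    refine Set.ncard_le_ncard ?_ hfin
    intro d hd
    rw [Finset.mem_coe, Finset.mem_image] at hd
    obtain ⟨n, hn, rfl⟩ := hd
    rw [hF, Finset.mem_filter, Finset.mem_range] at hn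
    obtain ⟨hnQ, hns, hsq, hpat⟩ := hn
    have hn0 : 0 < n := by obtain ⟨t, ht⟩ := hsodd; omega
    have hd8 := hsd n hns
    have hd81 : (δ * n) % 8 = 1 ∨ (δ * n) % 8 = 5 := by rw [hd8]; split_ifs <;> simp
    have hmul : δ * (δ * (n : ℤ)) = n := by rw [← mul_assoc, hδδ, one_mul]
    refine ⟨?_, by omega, ?_, ?_, ?_, ?_⟩
    · rw [← Int.squarefree_natAbs]
      have : (δ * (n : ℤ)).natAbs = n := by rcases hδ with rfl | rfl <;> simp
      rwa [this]
    · rw [hmul]; exact_mod_cast hn0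
    · rw [hmul, Int.cast_natCast]
      exact (Nat.cast_le.mpr (by omega)).trans (Nat.floor_le hQ)
    · intro p hp hpy hdvd
      by_cases hp2 : p = 2
      · subst hp2; omega
      · apply (hpat p ((mem_oddPrimes hy0).mpr ⟨hp, hp2, hpy⟩)).1
        have := dvd_mul_of_dvd_right hdvd δ
        rw [hmul] at this
        exact_mod_cast this
    · intro p hp hpy
      rw [chiD_prime _ hp]
      by_cases hp2 : p = 2
      · subst hp2
        rw [if_pos rfl, hd8]
        rcases hε 2 hp with h | h <;> simp [h]
      · rw [if_neg hp2, jacobiSym.mul_left,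
          (hpat p ((mem_oddPrimes hy0).mpr ⟨hp, hp2, hpy⟩)).2]
        rcases hδj p with h | h <;> simp [h]

/-- Let `δ ∈ {1, −1}` and `ε(p) ∈ {1, −1}` for each prime `p`. There is an absolute constant
`c > 0` such that for all sufficiently large `Q` and every real `2 ≤ y ≤ log Q`, the number of
squarefree `d ≡ 1 (mod 4)` with `0 < δd ≤ Q`, coprime to every prime `p ≤ y`, and with
`χ_d(p) = ε(p)` for all primes `p ≤ y`, is at least `c Q/(2^{π(y)} log y)`. -/
theorem stmt_9 :
    ∃ c > (0 : ℝ), ∃ Q₀ : ℝ,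
      ∀ δ : ℤ, δ = 1 ∨ δ = -1 →
      ∀ ε : ℕ → ℤ, (∀ p : ℕ, p.Prime → ε p = 1 ∨ ε p = -1) →
      ∀ Q : ℝ, Q₀ ≤ Q → ∀ y : ℝ, 2 ≤ y → y ≤ Real.log Q →
      c * Q / (2 ^ Nat.primeCounting ⌊y⌋₊ * Real.log y) ≤
        (Nat.card {d : ℤ // Squarefree d ∧ d % 4 = 1 ∧ 0 < δ * d ∧ ((δ * d : ℤ) : ℝ) ≤ Q ∧
          (∀ p : ℕ, p.Prime → (p : ℝ) ≤ y → ¬((p : ℤ) ∣ d)) ∧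
          (∀ p : ℕ, p.Prime → (p : ℝ) ≤ y → chiD d p = ε p)} : ℝ) := by
  obtain ⟨Q₀, hQ₀⟩ := Filter.eventually_atTop.mp
    (eventually_large (Real.exp (-4) / 3) (by positivity))
  refine ⟨Real.exp (-4) / 3 / 64, by positivity, Q₀, ?_⟩
  intro δ hδ ε hε Q hQ y hy hyQ
  obtain ⟨hQ3, hpi, h01, h08⟩ := hQ₀ Q hQ
  obtain ⟨η, s, hη, hs, hsodd, hcard⟩ := card_le_card hδ hε (by linarith : 0 ≤ Q) hy
  exact (count_lower hQ3 hy hyQ hpi h01 h08 hη hs hsodd).trans (by exact_mod_cast hcard)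
end
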